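/- arXiv:2109.03788 — 6 statements merged into one kernel-verified Lean document; each statement's English description precedes it below -/
import Mathlib

section
/- Let X be a countably infinite set, let P satisfy assumption (A) with constant C_*, and let V satisfy inf V > 0 and assumption (B). Fix a finite B₀ ⊆ X with sup{ 1/V(x) : x ∉ B₀ } < min(1, 1/C_*), and let C₂ be the constant from the upper bound for subharmonic functions. Then for every finite set B ⊆ X with B ⊇ B₀, every D ⊆ X, and every non-negative, non-zero, bounded function f which is (𝒰−I)-harmonic in D ∩ B^c and vanishes on D^c ∩ B^c, one has K̲_B ≤ f(x) / ( (P(x,x₀)/V(x)) ∑_{y∈B} f(y) ) ≤ C₂ K̄_B for all x ∈ D ∩ B^c and x₀ ∈ B. -/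
/-!
Writing `f x` as `(1 / V x) ∑ y, P x y * f y`, the sum over the finite set `B` is at most the whole
sum because `f ≥ 0`, and the bound for subharmonic functions says that it is smaller by at most the
factor `C₂`. Inside the sum over `B` each `P x y` may be replaced by `P x x₀` at the cost of a ratio
`P x y / P x x₀`, which lies between `K̲_B` and `K̄_B`. The supremum `K̄_B` is finite because
keeping one term of `P₂(x, z)` gives `P x y * P y z ≤ Cstar * P x z`, which bounds the ratio
`P x y / P x z` by `Cstar / P y z` uniformly in `x`.
-/

section

variable {X : Type*} {P : X → X → ℝ} {V f : X → ℝ} {B : Finset X} {C : ℝ} {x x₀ y : X}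

/-- The Feynman–Kac operator `𝒰` of the kernel `P` with potential `V`. The sum is a `tsum`, hence
`0` when `y ↦ P x y * f y` is not summable. -/
noncomputable def feynmanKac (P : X → X → ℝ) (V f : X → ℝ) (x : X) : ℝ :=
  1 / V x * ∑' y, P x y * f y

/-- `f` is `(𝒰 - I)`-subharmonic in `s`. -/
def IsSubharmonicOn (P : X → X → ℝ) (V : X → ℝ) (s : Set X) (f : X → ℝ) : Prop :=
  ∀ x ∈ s, f x ≤ feynmanKac P V f x

/-- `C` is a constant in the upper bound for bounded non-negative functions that are subharmonic
outside `B`; it plays the role of the paper's `C₂`, for one fixed `B`. -/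
def IsSubharmonicBound (P : X → X → ℝ) (V : X → ℝ) (B : Finset X) (C : ℝ) : Prop :=
  ∀ f : X → ℝ, (∀ x, 0 ≤ f x) → (∃ M, ∀ x, f x ≤ M) → IsSubharmonicOn P V (↑B)ᶜ f →
    ∀ x ∉ B, f x ≤ C * (1 / V x * ∑ y ∈ B, P x y * f y)

/-- The ratios of entries of `P` in a common row and in columns from `B`; their infimum and
supremum are the paper's `K̲_B` and `K̄_B`. -/
def columnRatios (P : X → X → ℝ) (B : Finset X) : Set ℝ :=
  {r : ℝ | ∃ x : X, ∃ y ∈ B, ∃ z ∈ B, r = P x y / P x z}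

theorem summable_mul_of_le {ι : Type*} {p g : ι → ℝ} {M : ℝ} (hp : ∀ i, 0 ≤ p i)
    (hp_sum : Summable p) (hg : ∀ i, 0 ≤ g i) (hgM : ∀ i, g i ≤ M) :
    Summable fun i ↦ p i * g i :=
  (hp_sum.mul_right M).of_nonneg_of_le (fun i ↦ mul_nonneg (hp i) (hg i))
    fun i ↦ mul_le_mul_of_nonneg_left (hgM i) (hp i)

theorem mul_le_tsum_mul (hP : ∀ x y, 0 ≤ P x y) (hP_sum : ∀ x, Summable (P x))
    (hP_sub : ∀ x, ∑' y, P x y ≤ 1) (x y z : X) :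
    P x y * P y z ≤ ∑' w, P x w * P w z := by
  have hP_le_one (w : X) : P w z ≤ 1 :=
    ((hP_sum w).le_tsum z fun u _ ↦ hP w u).trans (hP_sub w)
  exact (summable_mul_of_le (hP x) (hP_sum x) (hP · z) hP_le_one).le_tsum y
    fun w _ ↦ mul_nonneg (hP x w) (hP w z)

theorem bddBelow_columnRatios (hP : ∀ x y, 0 ≤ P x y) (B : Finset X) :
    BddBelow (columnRatios P B) := by
  refine ⟨0, ?_⟩
  rintro _ ⟨x, y, -, z, -, rfl⟩
  exact div_nonneg (hP x y) (hP x z)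

theorem bddAbove_columnRatios (hP : ∀ x y, 0 < P x y)
    (hC : ∀ x y z, P x y * P y z ≤ C * P x z) (B : Finset X) :
    BddAbove (columnRatios P B) := by
  have hratio (x y z : X) : P x y / P x z ≤ C / P y z :=
    (div_le_div_iff₀ (hP x z) (hP y z)).2 (hC x y z)
  obtain ⟨K, hK⟩ := (B ×ˢ B).image (fun p ↦ C / P p.1 p.2) |>.bddAbove
  refine ⟨K, ?_⟩
  rintro _ ⟨x, y, hy, z, hz, rfl⟩
  exact (hratio x y z).trans <| hK <| Finset.mem_coe.2 <|
    Finset.mem_image_of_mem (fun p : X × X ↦ C / P p.1 p.2) (Finset.mk_mem_product hy hz)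

theorem sInf_columnRatios_mul_le (hP : ∀ x y, 0 ≤ P x y) (hx₀ : x₀ ∈ B) (hxx₀ : 0 < P x x₀)
    (hy : y ∈ B) : sInf (columnRatios P B) * P x x₀ ≤ P x y :=
  (le_div_iff₀ hxx₀).1 <| csInf_le (bddBelow_columnRatios hP B) ⟨x, y, hy, x₀, hx₀, rfl⟩

theorem le_sSup_columnRatios_mul (hB : BddAbove (columnRatios P B)) (hx₀ : x₀ ∈ B)
    (hxx₀ : 0 < P x x₀) (hy : y ∈ B) : P x y ≤ sSup (columnRatios P B) * P x x₀ :=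
  (div_le_iff₀ hxx₀).1 <| le_csSup hB ⟨x, y, hy, x₀, hx₀, rfl⟩

theorem sInf_columnRatios_mul_sum_le (hP : ∀ x y, 0 ≤ P x y) (hf : ∀ y ∈ B, 0 ≤ f y)
    (hx₀ : x₀ ∈ B) (hxx₀ : 0 < P x x₀) :
    sInf (columnRatios P B) * P x x₀ * ∑ y ∈ B, f y ≤ ∑ y ∈ B, P x y * f y := by
  rw [Finset.mul_sum]
  exact Finset.sum_le_sum fun y hy ↦
    mul_le_mul_of_nonneg_right (sInf_columnRatios_mul_le hP hx₀ hxx₀ hy) (hf y hy)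

theorem sum_le_sSup_columnRatios_mul (hB : BddAbove (columnRatios P B)) (hf : ∀ y ∈ B, 0 ≤ f y)
    (hx₀ : x₀ ∈ B) (hxx₀ : 0 < P x x₀) :
    ∑ y ∈ B, P x y * f y ≤ sSup (columnRatios P B) * P x x₀ * ∑ y ∈ B, f y := by
  rw [Finset.mul_sum]
  exact Finset.sum_le_sum fun y hy ↦
    mul_le_mul_of_nonneg_right (le_sSup_columnRatios_mul hB hx₀ hxx₀ hy) (hf y hy)

theorem feynmanKac_nonneg (hPx : ∀ y, 0 ≤ P x y) (hVx : 0 ≤ V x) (hf : ∀ y, 0 ≤ f y) :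
    0 ≤ feynmanKac P V f x :=
  mul_nonneg (one_div_nonneg.2 hVx) (tsum_nonneg fun y ↦ mul_nonneg (hPx y) (hf y))

theorem sum_le_feynmanKac (hPx : ∀ y, 0 ≤ P x y) (hPx_sum : Summable (P x)) (hVx : 0 ≤ V x)
    (hf : ∀ y, 0 ≤ f y) (hf_bdd : ∃ M, ∀ y, f y ≤ M) (B : Finset X) :
    1 / V x * ∑ y ∈ B, P x y * f y ≤ feynmanKac P V f x := by
  obtain ⟨M, hM⟩ := hf_bdd
  exact mul_le_mul_of_nonneg_left
    ((summable_mul_of_le hPx hPx_sum hf hM).sum_le_tsum B fun y _ ↦ mul_nonneg (hPx y) (hf y))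
    (one_div_nonneg.2 hVx)

theorem isSubharmonicOn_of_eq_or_eq_zero (hP : ∀ x y, 0 ≤ P x y) (hV : ∀ x, 0 ≤ V x)
    (hf : ∀ x, 0 ≤ f x) {s : Set X} (h : ∀ x ∈ s, feynmanKac P V f x = f x ∨ f x = 0) :
    IsSubharmonicOn P V s f := fun x hx ↦
  (h x hx).elim Eq.ge fun h₀ ↦ h₀.trans_le (feynmanKac_nonneg (hP x) (hV x) hf)

theorem IsSubharmonicBound.sum_pos (hC : IsSubharmonicBound P V B C) (hf : ∀ x, 0 ≤ f x)
    (hf_ne : ∃ x, f x ≠ 0) (hf_bdd : ∃ M, ∀ x, f x ≤ M)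
    (hf_sub : IsSubharmonicOn P V (↑B)ᶜ f) : 0 < ∑ y ∈ B, f y := by
  refine Finset.sum_pos' (fun y _ ↦ hf y) ?_
  by_contra! hB
  have hB_zero : ∀ y ∈ B, f y = 0 := fun y hy ↦ (hB y hy).antisymm (hf y)
  obtain ⟨x, hx⟩ := hf_ne
  have hxB : x ∉ B := fun h ↦ hx (hB_zero x h)
  have hsum : ∑ y ∈ B, P x y * f y = 0 :=
    Finset.sum_eq_zero fun y hy ↦ by rw [hB_zero y hy, mul_zero]
  have hx_le : f x ≤ 0 := by
    simpa only [hsum, mul_zero] using hC f hf hf_bdd hf_sub x hxB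
  exact hx (hx_le.antisymm (hf x))

theorem sInf_columnRatios_mul_le_feynmanKac (hP : ∀ x y, 0 ≤ P x y) (hPx_sum : Summable (P x))
    (hVx : 0 ≤ V x) (hf : ∀ x, 0 ≤ f x) (hf_bdd : ∃ M, ∀ x, f x ≤ M) (hx₀ : x₀ ∈ B)
    (hxx₀ : 0 < P x x₀) :
    sInf (columnRatios P B) * (P x x₀ / V x * ∑ y ∈ B, f y) ≤ feynmanKac P V f x :=
  calc
    sInf (columnRatios P B) * (P x x₀ / V x * ∑ y ∈ B, f y)
      = 1 / V x * (sInf (columnRatios P B) * P x x₀ * ∑ y ∈ B, f y) := by ring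
    _ ≤ 1 / V x * ∑ y ∈ B, P x y * f y :=
      mul_le_mul_of_nonneg_left
        (sInf_columnRatios_mul_sum_le hP (fun y _ ↦ hf y) hx₀ hxx₀) (one_div_nonneg.2 hVx)
    _ ≤ feynmanKac P V f x := sum_le_feynmanKac (hP x) hPx_sum hVx hf hf_bdd B

theorem IsSubharmonicBound.le_mul_sSup_columnRatios_mul (hC : IsSubharmonicBound P V B C)
    (hC_nonneg : 0 ≤ C) (hB : BddAbove (columnRatios P B)) (hVx : 0 ≤ V x) (hf : ∀ x, 0 ≤ f x)
    (hf_bdd : ∃ M, ∀ x, f x ≤ M) (hf_sub : IsSubharmonicOn P V (↑B)ᶜ f) (hx : x ∉ B)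
    (hx₀ : x₀ ∈ B) (hxx₀ : 0 < P x x₀) :
    f x ≤ C * sSup (columnRatios P B) * (P x x₀ / V x * ∑ y ∈ B, f y) :=
  calc
    f x ≤ C * (1 / V x * ∑ y ∈ B, P x y * f y) := hC f hf hf_bdd hf_sub x hx
    _ ≤ C * (1 / V x * (sSup (columnRatios P B) * P x x₀ * ∑ y ∈ B, f y)) := by
      gcongr
      exact sum_le_sSup_columnRatios_mul hB (fun y _ ↦ hf y) hx₀ hxx₀
    _ = C * sSup (columnRatios P B) * (P x x₀ / V x * ∑ y ∈ B, f y) := by ring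

theorem stmt3_general (hP : ∀ x y, 0 < P x y) (hP_sum : ∀ x, Summable (P x))
    (hV : ∀ x, 0 < V x) (hB : BddAbove (columnRatios P B)) (hC : IsSubharmonicBound P V B C)
    (hC_nonneg : 0 ≤ C) (hf : ∀ x, 0 ≤ f x) (hf_ne : ∃ x, f x ≠ 0) (hf_bdd : ∃ M, ∀ x, f x ≤ M)
    (hf_sub : IsSubharmonicOn P V (↑B)ᶜ f) (hx : x ∉ B) (hf_super : feynmanKac P V f x ≤ f x)
    (hx₀ : x₀ ∈ B) :
    sInf (columnRatios P B) ≤ f x / (P x x₀ / V x * ∑ y ∈ B, f y) ∧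
      f x / (P x x₀ / V x * ∑ y ∈ B, f y) ≤ C * sSup (columnRatios P B) := by
  have hden : 0 < P x x₀ / V x * ∑ y ∈ B, f y :=
    mul_pos (div_pos (hP x x₀) (hV x)) (hC.sum_pos hf hf_ne hf_bdd hf_sub)
  rw [le_div_iff₀ hden, div_le_iff₀ hden]
  exact ⟨(sInf_columnRatios_mul_le_feynmanKac (fun x y ↦ (hP x y).le) (hP_sum x)
      (hV x).le hf hf_bdd hx₀ (hP x x₀)).trans hf_super,
    hC.le_mul_sSup_columnRatios_mul hC_nonneg hB (hV x).le hf hf_bdd hf_sub hx hx₀ (hP x x₀)⟩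

end

/-- (Two-sided estimate for harmonic functions, Corollary 2.5 of the paper.)
Under assumptions (A) and (B), with a finite `B₀` such that `sup {1/V x : x ∉ B₀} < min 1 (1/Cstar)`
and `C₂` the constant from the upper bound for subharmonic functions: for every finite `B ⊇ B₀`,
every `D ⊆ X`, and every non-negative, non-zero, bounded `f` which is `(𝒰 - I)`-harmonic in
`D ∩ Bᶜ` and vanishes on `Dᶜ ∩ Bᶜ`, one has
`K̲_B ≤ f x / ((P x x₀ / V x) ∑_{y ∈ B} f y) ≤ C₂ K̄_B` for `x ∈ D ∩ Bᶜ`, `x₀ ∈ B`. -/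
theorem stmt3 {X : Type*} [Countable X] [Infinite X]
    (P : X → X → ℝ)
    (hP_nonneg : ∀ x y, 0 ≤ P x y)
    (hP_sum : ∀ x : X, Summable (P x))
    (hP_sub : ∀ x : X, ∑' y, P x y ≤ 1)
    (hP_pos : ∀ x y, 0 < P x y)
    (Cstar : ℝ) (hCstar : 0 < Cstar)
    (hDSP : ∀ x y, ∑' z, P x z * P z y ≤ Cstar * P x y)
    (V : X → ℝ) (hV_pos : ∃ v > 0, ∀ x, v ≤ V x)
    (hV_conf : ∀ M > 0, ∃ BM : Finset X, ∀ x ∉ BM, M ≤ V x)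
    (B₀ : Finset X) (C₁ : ℝ)
    (hC₁lt : C₁ < min 1 (1 / Cstar))
    (hB₀ : ∀ x ∉ B₀, 1 / V x ≤ C₁)
    -- `C₂` is the constant from the upper bound for subharmonic functions:
    (C₂ : ℝ) (hC₂pos : 0 < C₂)
    (hC₂ : ∀ B : Finset X, B₀ ⊆ B →
      ∀ f : X → ℝ, (∀ x, 0 ≤ f x) → (∃ M : ℝ, ∀ x, f x ≤ M) →
        (∀ x ∉ B, f x ≤ (1 / V x) * ∑' y, P x y * f y) →
        ∀ x ∉ B, f x ≤ C₂ * ((1 / V x) * ∑ y ∈ B, P x y * f y)) :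
    ∀ B : Finset X, B₀ ⊆ B → ∀ D : Set X,
      ∀ f : X → ℝ, (∀ x, 0 ≤ f x) → (∃ x, f x ≠ 0) → (∃ M : ℝ, ∀ x, f x ≤ M) →
        (∀ x, x ∈ D → x ∉ B → (1 / V x) * ∑' y, P x y * f y = f x) →
        (∀ x, x ∉ D → x ∉ B → f x = 0) →
        ∀ x, x ∈ D → x ∉ B → ∀ x₀ ∈ B,
          sInf {r : ℝ | ∃ x' : X, ∃ y ∈ B, ∃ z ∈ B, r = P x' y / P x' z} ≤
              f x / ((P x x₀ / V x) * ∑ y ∈ B, f y) ∧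
            f x / ((P x x₀ / V x) * ∑ y ∈ B, f y) ≤
              C₂ * sSup {r : ℝ | ∃ x' : X, ∃ y ∈ B, ∃ z ∈ B, r = P x' y / P x' z} := by
  intro B hB D f hf hf_ne hf_bdd hf_harm hf_van x hxD hxB x₀ hx₀
  obtain ⟨v, hv, hvV⟩ := hV_pos
  have hV (x : X) : 0 < V x := hv.trans_le (hvV x)
  have hK : BddAbove (columnRatios P B) := bddAbove_columnRatios hP_pos
    (fun x y z ↦ (mul_le_tsum_mul hP_nonneg hP_sum hP_sub x y z).trans (hDSP x z)) B
  have hf_sub : IsSubharmonicOn P V (↑B)ᶜ f :=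
    isSubharmonicOn_of_eq_or_eq_zero hP_nonneg (fun x ↦ (hV x).le) hf fun x hx ↦
      (em (x ∈ D)).imp (hf_harm x · hx) (hf_van x · hx)
  exact stmt3_general hP_pos hP_sum hV hK (hC₂ B hB) hC₂pos.le hf hf_ne hf_bdd hf_sub hxB
    (hf_harm x hxD hxB).le hx₀
end

section
/- Let X be countably infinite, let b : X × X → [0,∞) be symmetric with b(x,x) = 0, ∑_{y} b(x,y) > 0 for every x, and b* := sup_x ∑_y b(x,y) < ∞; let m : X → (0,∞) and V : X → ℝ be bounded below. Set b(x) = ∑_y b(x,y), A = { x : m(x)V(x) + b(x) ≤ 0 }, P(x,y) = b(x,y)/b*, and Ṽ(x) = (m(x)V(x)+b(x))/b* for x ∈ A^c, Ṽ(x) = 0 for x ∈ A. Let H f(x) = (1/m(x)) ∑_y b(x,y)(f(x)−f(y)) + V(x)f(x) and let 𝒰 f(x) = (1/Ṽ(x)) ∑_y P(x,y)f(y). Then for every f with ∑_y b(x,y)|f(y)| < ∞ for all x, and every x ∈ A^c: H f(x) = −( V(x) + b(x)/m(x) ) (𝒰−I)f(x). In particular, for D ⊆ A^c, H f(x) ≥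 0 for all x ∈ D if and only if (𝒰−I)f(x) ≤ 0 for all x ∈ D. -/
/-!
Pulling `f x` out of the defining sum gives
`m x * H f x = (m x * V x + b(x)) * f x - ∑_y b x y * f y`. The operator `𝒰` does not change when
its kernel and its potential are divided by the same constant, so `∑_y b x y * f y` is
`(m x * V x + b(x)) * 𝒰 f x`, and dividing by `m x` gives the identity. On `Aᶜ` its prefactor
`V x + b(x) / m x` is positive, hence the equivalence of signs.
-/

section Field

variable {X 𝕜 : Type*} [Field 𝕜] [TopologicalSpace 𝕜]

/-- The weighted vertex degree `b(x) = ∑_y b(x,y)` of a graph with edge weights `b`; it is a `tsum`,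
hence `0` where the weights at `x` are not summable. -/
noncomputable def weightedDegree (b : X → X → 𝕜) (x : X) : 𝕜 :=
  ∑' y, b x y

/-- The function `m V + b(·)`, the total coefficient of `f x` in `m x * H f x`. The set `A` of the
paper is where it is nonpositive, and `Ṽ` is this function divided by `b*` off `A`. -/
noncomputable def totalPotential (b : X → X → 𝕜) (m V : X → 𝕜) (x : X) : 𝕜 :=
  m x * V x + weightedDegree b x

/-- The graph Laplacian `H` with edge weights `b`, measure `m` and potential `V`. -/
noncomputable def graphLaplacian (b : X → X → 𝕜) (m V f : X → 𝕜) (x : X) : 𝕜 :=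
  (1 / m x) * (∑' y, b x y * (f x - f y)) + V x * f x

/-- The operator `𝒰` associated to a kernel `P` and a potential `W`. It takes the junk value `0`
where `W` vanishes. -/
noncomputable def kernelOperator (P : X → X → 𝕜) (W f : X → 𝕜) (x : X) : 𝕜 :=
  (1 / W x) * ∑' y, P x y * f y

variable {b : X → X → 𝕜} {m V f : X → 𝕜} {x : X}

theorem add_weightedDegree_div (b : X → X → 𝕜) (V : X → 𝕜) (hm : m x ≠ 0) :
    V x + weightedDegree b x / m x = totalPotential b m V x / m x := by
  rw [totalPotential, add_div, mul_div_cancel_left₀ _ hm]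

variable [IsTopologicalRing 𝕜] [T2Space 𝕜]

theorem kernelOperator_div_const (P : X → X → 𝕜) (W f : X → 𝕜) {c : 𝕜} (hc : c ≠ 0) (x : X) :
    kernelOperator (fun x y => P x y / c) (fun x => W x / c) f x = kernelOperator P W f x := by
  simp only [kernelOperator, div_mul_eq_mul_div, tsum_div_const]
  field_simp

theorem tsum_mul_const_sub (hb : Summable (b x)) (hf : Summable fun y => b x y * f y) (a : 𝕜) :
    ∑' y, b x y * (a - f y) = weightedDegree b x * a - ∑' y, b x y * f y := by
  simp only [mul_sub]
  rw [(hb.mul_right a).tsum_sub hf, tsum_mul_right, weightedDegree]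

theorem graphLaplacian_eq_div (hm : m x ≠ 0) (hb : Summable (b x))
    (hf : Summable fun y => b x y * f y) :
    graphLaplacian b m V f x = (totalPotential b m V x * f x - ∑' y, b x y * f y) / m x := by
  rw [graphLaplacian, tsum_mul_const_sub hb hf, totalPotential]
  field_simp
  ring

theorem graphLaplacian_eq_neg_mul_kernelOperator_sub (hm : m x ≠ 0)
    (hW : totalPotential b m V x ≠ 0) (hb : Summable (b x))
    (hf : Summable fun y => b x y * f y) :
    graphLaplacian b m V f x =
      -(V x + weightedDegree b x / m x) *
        (kernelOperator b (totalPotential b m V) f x - f x) := by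
  rw [graphLaplacian_eq_div hm hb hf, add_weightedDegree_div b V hm, kernelOperator]
  field_simp
  ring

end Field

section LinearOrderedField

variable {X 𝕜 : Type*} [Field 𝕜] [LinearOrder 𝕜] [IsStrictOrderedRing 𝕜] [TopologicalSpace 𝕜]
  [IsTopologicalRing 𝕜] [T2Space 𝕜]

theorem graphLaplacian_nonneg_iff {b : X → X → 𝕜} {m V f : X → 𝕜} {x : X} (hm : 0 < m x)
    (hW : 0 < totalPotential b m V x) (hb : Summable (b x))
    (hf : Summable fun y => b x y * f y) :
    0 ≤ graphLaplacian b m V f x ↔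
      kernelOperator b (totalPotential b m V) f x - f x ≤ 0 := by
  have hpos : 0 < V x + weightedDegree b x / m x := by
    rw [add_weightedDegree_div b V hm.ne']
    exact div_pos hW hm
  rw [graphLaplacian_eq_neg_mul_kernelOperator_sub hm.ne' hW.ne' hb hf, neg_mul, ← mul_neg,
    mul_nonneg_iff_of_pos_left hpos, neg_nonneg]

theorem stmt8_general (b : X → X → 𝕜) (hb_sum : ∀ x, Summable (b x)) {c : 𝕜} (hc : c ≠ 0)
    (m : X → 𝕜) (hm : ∀ x, 0 < m x) (V f : X → 𝕜)
    (hf : ∀ x, Summable fun y => b x y * f y) :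
    (∀ x, totalPotential b m V x ≠ 0 →
      graphLaplacian b m V f x =
        -(V x + weightedDegree b x / m x) *
          (kernelOperator (fun x y => b x y / c) (fun x => totalPotential b m V x / c) f x
            - f x)) ∧
    (∀ D : Set X, (∀ x ∈ D, 0 < totalPotential b m V x) →
      ((∀ x ∈ D, 0 ≤ graphLaplacian b m V f x) ↔
        (∀ x ∈ D,
          kernelOperator (fun x y => b x y / c) (fun x => totalPotential b m V x / c) f x
            - f x ≤ 0))) := by
  simp only [kernelOperator_div_const b _ f hc]
  exact ⟨fun x hW => graphLaplacian_eq_neg_mul_kernelOperator_sub (hm x).ne' hW (hb_sum x) (hf x),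
    fun D hD => forall₂_congr fun x hx =>
      graphLaplacian_nonneg_iff (hm x) (hD x hx) (hb_sum x) (hf x)⟩

end LinearOrderedField

theorem summable_mul_of_summable_mul_abs {ι : Type*} {g f : ι → ℝ}
    (h : Summable fun i => g i * |f i|) : Summable fun i => g i * f i :=
  .of_abs <| h.abs.congr fun i => by rw [abs_mul, abs_mul, abs_abs]

/-- (Proposition 3.1 of the paper.) In the weighted-graph setting, with
`b* = sup_x ∑_y b x y`, `A = {x : m x * V x + b(x) ≤ 0}`, `P x y = b x y / b*`,
`Ṽ x = (m x * V x + b(x)) / b*` on `Aᶜ`, the graph Laplacian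
`H f x = (1/m x) ∑_y b x y (f x - f y) + V x * f x` and the Feynman–Kac operator
`𝒰 f x = (1/Ṽ x) ∑_y P x y * f y` satisfy, for admissible `f` and `x ∈ Aᶜ`,
`H f x = -(V x + b(x)/m x) * (𝒰 f x - f x)`; in particular, for `D ⊆ Aᶜ`,
`H f ≥ 0` on `D` iff `(𝒰 - I) f ≤ 0` on `D`. -/
theorem stmt8 {X : Type*} [Countable X] [Infinite X]
    (b : X → X → ℝ)
    (hb_nonneg : ∀ x y, 0 ≤ b x y)
    (hb_diag : ∀ x, b x x = 0)
    (hb_symm : ∀ x y, b x y = b y x)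
    (hb_sum : ∀ x, Summable (b x))
    (hb_row_pos : ∀ x, 0 < ∑' y, b x y)
    (bstar : ℝ)
    (hbstar : IsLUB (Set.range fun x => ∑' y, b x y) bstar)
    (m : X → ℝ) (hm : ∀ x, 0 < m x)
    (V : X → ℝ) (hV : BddBelow (Set.range V))
    (f : X → ℝ) (hf_adm : ∀ x, Summable fun y => b x y * |f y|) :
    (∀ x, 0 < m x * V x + ∑' y, b x y →
      (1 / m x) * (∑' y, b x y * (f x - f y)) + V x * f x =
        -(V x + (∑' y, b x y) / m x) *
          ((1 / ((m x * V x + ∑' y, b x y) / bstar)) *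
              (∑' y, (b x y / bstar) * f y) - f x)) ∧
    (∀ D : Set X, (∀ x ∈ D, 0 < m x * V x + ∑' y, b x y) →
      ((∀ x ∈ D, 0 ≤ (1 / m x) * (∑' y, b x y * (f x - f y)) + V x * f x) ↔
        (∀ x ∈ D,
          (1 / ((m x * V x + ∑' y, b x y) / bstar)) *
              (∑' y, (b x y / bstar) * f y) - f x ≤ 0))) := by
  have hbstar_pos : 0 < bstar :=
    (hb_row_pos (Classical.arbitrary X)).trans_le (hbstar.1 ⟨_, rfl⟩)
  have h := stmt8_general b hb_sum hbstar_pos.ne' m hm V f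
    fun x => summable_mul_of_summable_mul_abs (hf_adm x)
  exact ⟨fun x hx => h.1 x hx.ne', h.2⟩
end

section
/- Let (X,d) be a countably infinite metric space and let P be a sub-probability kernel on X such that P(x,y) ≍ J(d(x,y)) for all x,y ∈ X (i.e., there are constants c₁, c₂ > 0 with c₁ J(d(x,y)) ≤ P(x,y) ≤ c₂ J(d(x,y))), where J : [0,∞) → (0,∞) is non-increasing and satisfies the doubling condition J(r) ≤ C J(2r) for all r > 0 and some C > 0. Then P satisfies assumption (A): P(x,y) > 0 for all x,y and there is C_* > 0 with ∑_{z∈X} P(x,z)P(z,y) ≤ C_* P(x,y) for all x,y ∈ X. -/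
/-!
By the triangle inequality, one of the two steps of a path `x → z → y` has length at least
`d(x, y) / 2`, so doubling gives `min (P x z) (P z y) ≤ K * P x y`. Writing the product of the two
steps as `min * max` yields `P x z * P z y ≤ K * P x y * (P x z + P z y)`. Summing over `z`, the row
sums of `P` are bounded, and so are its column sums, since `P` is symmetric up to a constant.
-/

section MinBound

variable {ι : Type*} {f g : ι → ℝ} {a : ℝ}

theorem mul_le_mul_add_of_min_le {s t : ℝ} (hs : 0 ≤ s) (ht : 0 ≤ t) (h : min s t ≤ a) :
    s * t ≤ a * (s + t) :=
  calc s * t = min s t * max s t := (min_mul_max s t).symm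
    _ ≤ a * (s + t) :=
        mul_le_mul h (max_le_add_of_nonneg hs ht) (hs.trans (le_max_left s t))
          ((le_min hs ht).trans h)

theorem summable_mul_of_min_le (hf₀ : ∀ i, 0 ≤ f i) (hg₀ : ∀ i, 0 ≤ g i) (hf : Summable f)
    (hg : Summable g) (h : ∀ i, min (f i) (g i) ≤ a) : Summable fun i => f i * g i :=
  .of_nonneg_of_le (fun i => mul_nonneg (hf₀ i) (hg₀ i))
    (fun i => mul_le_mul_add_of_min_le (hf₀ i) (hg₀ i) (h i)) ((hf.add hg).mul_left a)

theorem tsum_mul_le_of_min_le (hf₀ : ∀ i, 0 ≤ f i) (hg₀ : ∀ i, 0 ≤ g i) (hf : Summable f)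
    (hg : Summable g) (h : ∀ i, min (f i) (g i) ≤ a) :
    ∑' i, f i * g i ≤ a * (∑' i, f i + ∑' i, g i) :=
  calc ∑' i, f i * g i ≤ ∑' i, a * (f i + g i) :=
        (summable_mul_of_min_le hf₀ hg₀ hf hg h).tsum_le_tsum
          (fun i => mul_le_mul_add_of_min_le (hf₀ i) (hg₀ i) (h i)) ((hf.add hg).mul_left a)
    _ = a * (∑' i, f i + ∑' i, g i) := by rw [tsum_mul_left, hf.tsum_add hg]

end MinBound

theorem summable_and_tsum_mul_le_of_min_le_of_swap_le {X : Type*} {P : X → X → ℝ} {K L M : ℝ}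
    (hP_nonneg : ∀ x y, 0 ≤ P x y) (hP_sum : ∀ x, Summable (P x))
    (hP_tsum : ∀ x, ∑' y, P x y ≤ M) (hL : 0 ≤ L) (h_swap : ∀ x y, P x y ≤ L * P y x)
    (h_min : ∀ x y z, min (P x z) (P z y) ≤ K * P x y) (x y : X) :
    Summable (fun z => P x z * P z y) ∧
      ∑' z, P x z * P z y ≤ K * (1 + L) * M * P x y := by
  have h_col : Summable fun z => P z y :=
    .of_nonneg_of_le (fun z => hP_nonneg z y) (fun z => h_swap z y) ((hP_sum y).mul_left L)
  have h_col_tsum : ∑' z, P z y ≤ L * M :=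
    calc ∑' z, P z y ≤ ∑' z, L * P y z :=
          h_col.tsum_le_tsum (fun z => h_swap z y) ((hP_sum y).mul_left L)
      _ = L * ∑' z, P y z := tsum_mul_left
      _ ≤ L * M := mul_le_mul_of_nonneg_left (hP_tsum y) hL
  have h_bound : 0 ≤ K * P x y :=
    (le_min (hP_nonneg x x) (hP_nonneg x y)).trans (h_min x y x)
  refine ⟨summable_mul_of_min_le (hP_nonneg x) (hP_nonneg · y) (hP_sum x) h_col (h_min x y), ?_⟩
  calc ∑' z, P x z * P z y ≤ K * P x y * (∑' z, P x z + ∑' z, P z y) :=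
        tsum_mul_le_of_min_le (hP_nonneg x) (hP_nonneg · y) (hP_sum x) h_col (h_min x y)
    _ ≤ K * P x y * (M + L * M) :=
        mul_le_mul_of_nonneg_left (add_le_add (hP_tsum x) h_col_tsum) h_bound
    _ = K * (1 + L) * M * P x y := by ring

/-- A positive, non-increasing function on `[0, ∞)` that is doubling with constant `C`: the profile
of a kernel comparable to a function of the distance. It is encoded as a function on `ℝ` whose
values on negative numbers are unconstrained. -/
structure IsDoublingProfile (J : ℝ → ℝ) (C : ℝ) : Prop where
  pos : ∀ r, 0 ≤ r → 0 < J r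
  antitoneOn : AntitoneOn J (Set.Ici 0)
  le_mul_two : ∀ r, 0 < r → J r ≤ C * J (2 * r)

namespace IsDoublingProfile

variable {J : ℝ → ℝ} {C r s t : ℝ}

theorem one_le (hJ : IsDoublingProfile J C) : 1 ≤ C := by
  have h_two : 0 < J (2 * 1) := hJ.pos _ (by norm_num)
  have h_anti : J (2 * 1) ≤ J 1 :=
    hJ.antitoneOn (Set.mem_Ici.2 (by norm_num)) (Set.mem_Ici.2 (by norm_num)) (by norm_num)
  exact (le_mul_iff_one_le_left h_two).1 (h_anti.trans (hJ.le_mul_two 1 one_pos))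

theorem apply_half_le (hJ : IsDoublingProfile J C) (hr : 0 ≤ r) : J (r / 2) ≤ C * J r := by
  rcases hr.eq_or_lt with rfl | hr
  · simpa only [zero_div] using le_mul_of_one_le_left (hJ.pos 0 le_rfl).le hJ.one_le
  · simpa only [mul_div_cancel₀ r two_ne_zero] using hJ.le_mul_two (r / 2) (half_pos hr)

theorem min_apply_le_of_le_add (hJ : IsDoublingProfile J C) (hr : 0 ≤ r) (hs : 0 ≤ s)
    (ht : 0 ≤ t) (h : r ≤ s + t) : min (J s) (J t) ≤ C * J r := by
  have h_half : r / 2 ≤ max s t := by linarith [le_max_left s t, le_max_right s t]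
  calc min (J s) (J t) = J (max s t) := (hJ.antitoneOn.map_max hs ht).symm
    _ ≤ J (r / 2) := hJ.antitoneOn (div_nonneg hr zero_le_two) (hs.trans (le_max_left s t)) h_half
    _ ≤ C * J r := hJ.apply_half_le hr

end IsDoublingProfile

section ComparableKernel

variable {X : Type*} [PseudoMetricSpace X] {P : X → X → ℝ} {J : ℝ → ℝ} {C c₁ c₂ : ℝ}

theorem le_div_mul_swap_of_comparable_dist (hc₁ : 0 < c₁) (hc₂ : 0 ≤ c₂)
    (hPJ : ∀ x y, c₁ * J (dist x y) ≤ P x y ∧ P x y ≤ c₂ * J (dist x y)) (x y : X) :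
    P x y ≤ c₂ / c₁ * P y x :=
  calc P x y ≤ c₂ * J (dist x y) := (hPJ x y).2
    _ = c₂ / c₁ * (c₁ * J (dist y x)) := by rw [dist_comm]; field_simp
    _ ≤ c₂ / c₁ * P y x := by gcongr; exact (hPJ y x).1

theorem IsDoublingProfile.min_le_of_comparable_dist (hJ : IsDoublingProfile J C) (hc₁ : 0 < c₁)
    (hc₂ : 0 ≤ c₂) (hPJ : ∀ x y, c₁ * J (dist x y) ≤ P x y ∧ P x y ≤ c₂ * J (dist x y))
    (x y z : X) : min (P x z) (P z y) ≤ C * (c₂ / c₁) * P x y := by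
  have hC : 0 ≤ C := zero_le_one.trans hJ.one_le
  calc min (P x z) (P z y) ≤ min (c₂ * J (dist x z)) (c₂ * J (dist z y)) :=
        min_le_min (hPJ x z).2 (hPJ z y).2
    _ = c₂ * min (J (dist x z)) (J (dist z y)) := (mul_min_of_nonneg _ _ hc₂).symm
    _ ≤ c₂ * (C * J (dist x y)) :=
        mul_le_mul_of_nonneg_left (hJ.min_apply_le_of_le_add dist_nonneg dist_nonneg dist_nonneg
          (dist_triangle x z y)) hc₂
    _ = C * (c₂ / c₁) * (c₁ * J (dist x y)) := by field_simp
    _ ≤ C * (c₂ / c₁) * P x y := by gcongr; exact (hPJ x y).1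

end ComparableKernel

theorem stmt12_general {X : Type*} [PseudoMetricSpace X] {P : X → X → ℝ} {J : ℝ → ℝ}
    {C c₁ c₂ M : ℝ} (hP_sum : ∀ x, Summable (P x)) (hP_tsum : ∀ x, ∑' y, P x y ≤ M)
    (hJ : IsDoublingProfile J C) (hc₁ : 0 < c₁) (hc₂ : 0 ≤ c₂)
    (hPJ : ∀ x y, c₁ * J (dist x y) ≤ P x y ∧ P x y ≤ c₂ * J (dist x y)) :
    (∀ x y, 0 < P x y) ∧ ∀ x y, Summable (fun z => P x z * P z y) ∧
      ∑' z, P x z * P z y ≤ C * (c₂ / c₁) * (1 + c₂ / c₁) * M * P x y := by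
  have hP_pos : ∀ x y, 0 < P x y := fun x y =>
    (mul_pos hc₁ (hJ.pos _ dist_nonneg)).trans_le (hPJ x y).1
  exact ⟨hP_pos, summable_and_tsum_mul_le_of_min_le_of_swap_le (fun x y => (hP_pos x y).le)
    hP_sum hP_tsum (div_nonneg hc₂ hc₁.le) (le_div_mul_swap_of_comparable_dist hc₁ hc₂ hPJ)
    (hJ.min_le_of_comparable_dist hc₁ hc₂ hPJ)⟩

/-- (Proposition 5.1 of the paper.) Let `(X,d)` be a countably infinite metric
space and `P` a sub-probability kernel on `X` with `P x y ≍ J (dist x y)`, where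
`J : [0,∞) → (0,∞)` is non-increasing and doubling (`J r ≤ CJ * J (2r)` for `r > 0`). Then `P`
satisfies assumption (A): `P x y > 0` everywhere and there is `Cstar > 0` with
`∑_z P x z * P z y ≤ Cstar * P x y` for all `x, y`. -/
theorem stmt12 {X : Type*} [MetricSpace X] [Countable X] [Infinite X]
    (P : X → X → ℝ)
    (hP_nonneg : ∀ x y, 0 ≤ P x y)
    (hP_sum : ∀ x : X, Summable (P x))
    (hP_sub : ∀ x : X, ∑' y, P x y ≤ 1)
    (J : ℝ → ℝ)
    (hJ_pos : ∀ r, 0 ≤ r → 0 < J r)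
    (hJ_anti : ∀ r s, 0 ≤ r → r ≤ s → J s ≤ J r)
    (CJ : ℝ) (hCJ : 0 < CJ)
    (hJ_doub : ∀ r : ℝ, 0 < r → J r ≤ CJ * J (2 * r))
    (c₁ c₂ : ℝ) (hc₁ : 0 < c₁) (hc₂ : 0 < c₂)
    (hPJ : ∀ x y, c₁ * J (dist x y) ≤ P x y ∧ P x y ≤ c₂ * J (dist x y)) :
    (∀ x y, 0 < P x y) ∧
    ∃ Cstar > 0, ∀ x y, ∑' z, P x z * P z y ≤ Cstar * P x y := by
  have hJ : IsDoublingProfile J CJ :=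
    ⟨hJ_pos, fun r hr s _ hrs => hJ_anti r s hr hrs, hJ_doub⟩
  have ⟨hP_pos, h_two_step⟩ := stmt12_general hP_sum hP_sub hJ hc₁ hc₂.le hPJ
  exact ⟨hP_pos, _, by positivity, fun x y => (h_two_step x y).2⟩
end

section
/- Let X be countably infinite, let Q be a probability kernel on X with n-step kernels Q_n (Q₁ = Q, Q_n(x,y) = ∑_z Q(x,z)Q_{n−1}(z,y)), and let a : ℕ → [0,1] be a probability mass function supported on {1,2,3,…} (the one-step distribution of an increasing random walk τ on ℕ₀ started at 0). Assume the DSP on ℕ: (a∗a)(n) ≤ C a(n) for all n ≥ 2, where (a∗a)(n) = ∑_{k=1}^{n−1} a(k)a(n−k). Then the subordinate kernel P(x,y) := ∑_{k=1}^{∞} Q_k(x,y) a(k) satisfies ∑_{z∈X} P(x,z)P(z,y) ≤ C P(x,y) for all x,y ∈ X, with the same constant C. -/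
/-- The `n`-step kernels of a Markov kernel `Q` on a countable space: `Q₁ = Q` and
`Q_n(x,y) = ∑_z Q(x,z) Q_{n-1}(z,y)`; by convention `Q₀` is the identity kernel. -/
noncomputable def kernelPow {X : Type*} [DecidableEq X] (Q : X → X → ℝ) : ℕ → X → X → ℝ
  | 0 => fun x y => if x = y then 1 else 0
  | 1 => Q
  | (n + 2) => fun x y => ∑' z, Q x z * kernelPow Q (n + 1) z y

open scoped ENNReal
open Finset.HasAntidiagonal (antidiagonal)

/-
By Chapman–Kolmogorov, composing `∑ k, Q_k a(k)` with `∑ l, Q_l b(l)` and collecting the terms with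
`k + l = n` gives `∑ n, Q_n (a ∗ b)(n)`: subordination turns convolution of step distributions into
composition of kernels. The DSP inequality `a ∗ a ≤ C a` can therefore be compared term by term.
All rearrangements of series are carried out in `ℝ≥0∞`, where they need no summability.
-/

section Kernels

variable {X : Type*}

/-- Composition of `ℝ≥0∞`-valued kernels on a discrete space, as a product of infinite matrices. -/
noncomputable def kernelComp (R S : X → X → ℝ≥0∞) : X → X → ℝ≥0∞ :=
  fun x y => ∑' z, R x z * S z y

lemma kernelComp_assoc (R S T : X → X → ℝ≥0∞) :
    kernelComp (kernelComp R S) T = kernelComp R (kernelComp S T) := by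
  funext x y
  simp only [kernelComp, ← ENNReal.tsum_mul_left, ← ENNReal.tsum_mul_right, mul_assoc]
  exact ENNReal.tsum_comm

variable [DecidableEq X]

/-- The identity kernel, the unit of `kernelComp`: its row at `x` is the point mass at `x`. -/
def kernelId : X → X → ℝ≥0∞ :=
  fun x y => if x = y then 1 else 0

lemma kernelId_comp (R : X → X → ℝ≥0∞) : kernelComp kernelId R = R := by
  funext x y
  simp [kernelComp, kernelId]

lemma kernelComp_id (R : X → X → ℝ≥0∞) : kernelComp R kernelId = R := by
  funext x y
  simp [kernelComp, kernelId]

/-- The `n`-step kernels of an `ℝ≥0∞`-valued kernel, the counterpart of `kernelPow` for which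
the Chapman–Kolmogorov equation holds without any summability assumption. -/
noncomputable def stepKernel (Q : X → X → ℝ≥0∞) : ℕ → X → X → ℝ≥0∞
  | 0 => kernelId
  | n + 1 => kernelComp Q (stepKernel Q n)

lemma stepKernel_succ (Q : X → X → ℝ≥0∞) (n : ℕ) :
    stepKernel Q (n + 1) = kernelComp Q (stepKernel Q n) :=
  rfl

lemma stepKernel_one (Q : X → X → ℝ≥0∞) : stepKernel Q 1 = Q :=
  kernelComp_id Q

lemma stepKernel_add (Q : X → X → ℝ≥0∞) (m n : ℕ) :
    stepKernel Q (m + n) = kernelComp (stepKernel Q m) (stepKernel Q n) := by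
  induction m with
  | zero => rw [Nat.zero_add, stepKernel, kernelId_comp]
  | succ m ih => rw [Nat.add_right_comm, stepKernel_succ, ih, stepKernel_succ, kernelComp_assoc]

lemma stepKernel_le_one {Q : X → X → ℝ≥0∞} (hQ : ∀ x, ∑' y, Q x y ≤ 1) (n : ℕ) (x y : X) :
    stepKernel Q n x y ≤ 1 := by
  induction n generalizing x with
  | zero =>
    simp only [stepKernel, kernelId]
    split_ifs <;> simp
  | succ n ih =>
    calc ∑' z, Q x z * stepKernel Q n z y
        ≤ ∑' z, Q x z := ENNReal.tsum_le_tsum fun z => mul_le_of_le_one_right' (ih z)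
      _ ≤ 1 := hQ x

lemma stepKernel_ne_top {Q : X → X → ℝ≥0∞} (hQ : ∀ x, ∑' y, Q x y ≤ 1) (n : ℕ) (x y : X) :
    stepKernel Q n x y ≠ ∞ :=
  ne_top_of_le_ne_top ENNReal.one_ne_top (stepKernel_le_one hQ n x y)

end Kernels

section Subordination

lemma ennreal_tsum_tsum_eq_tsum_sum_antidiagonal {A : Type*} [AddMonoid A]
    [Finset.HasAntidiagonal A] (f : A → A → ℝ≥0∞) :
    ∑' k, ∑' l, f k l = ∑' n, ∑ kl ∈ antidiagonal n, f kl.1 kl.2 := by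
  rw [← ENNReal.tsum_prod, ← Finset.HasAntidiagonal.sigmaAntidiagonalEquivProd.tsum_eq,
    ENNReal.tsum_sigma']
  exact tsum_congr fun n => Finset.tsum_subtype (antidiagonal n) fun kl => f kl.1 kl.2

variable {X : Type*} [DecidableEq X]

/-- The kernel `∑ k, Q_k a(k)` of the chain with kernel `Q` observed along an independent random
walk with step distribution `a`. The sum includes `k = 0`, so `a 0` need not vanish. -/
noncomputable def subordinateKernel (Q : X → X → ℝ≥0∞) (a : ℕ → ℝ≥0∞) : X → X → ℝ≥0∞ :=
  fun x y => ∑' k, stepKernel Q k x y * a k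

theorem kernelComp_subordinateKernel (Q : X → X → ℝ≥0∞) (a b : ℕ → ℝ≥0∞) :
    kernelComp (subordinateKernel Q a) (subordinateKernel Q b) =
      subordinateKernel Q fun n => ∑ kl ∈ antidiagonal n, a kl.1 * b kl.2 := by
  funext x y
  calc ∑' z, (∑' k, stepKernel Q k x z * a k) * ∑' l, stepKernel Q l z y * b l
      = ∑' z, ∑' k, ∑' l, stepKernel Q k x z * a k * (stepKernel Q l z y * b l) := by
        simp only [ENNReal.tsum_mul_left, ENNReal.tsum_mul_right]
    _ = ∑' k, ∑' l, ∑' z, stepKernel Q k x z * a k * (stepKernel Q l z y * b l) := by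
        rw [ENNReal.tsum_comm]
        exact tsum_congr fun k => ENNReal.tsum_comm
    _ = ∑' k, ∑' l, stepKernel Q (k + l) x y * (a k * b l) := by
        simp only [stepKernel_add, kernelComp, ← ENNReal.tsum_mul_right]
        exact tsum_congr fun k => tsum_congr fun l => tsum_congr fun z => mul_mul_mul_comm _ _ _ _
    _ = ∑' n, ∑ kl ∈ antidiagonal n, stepKernel Q (kl.1 + kl.2) x y * (a kl.1 * b kl.2) :=
        ennreal_tsum_tsum_eq_tsum_sum_antidiagonal _
    _ = ∑' n, stepKernel Q n x y * ∑ kl ∈ antidiagonal n, a kl.1 * b kl.2 := by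
        refine tsum_congr fun n => ?_
        rw [Finset.mul_sum]
        refine Finset.sum_congr rfl fun kl hkl => ?_
        rw [Finset.HasAntidiagonal.mem_antidiagonal.1 hkl]

lemma subordinateKernel_mono (Q : X → X → ℝ≥0∞) {a b : ℕ → ℝ≥0∞} (hab : ∀ n, a n ≤ b n) (x y : X) :
    subordinateKernel Q a x y ≤ subordinateKernel Q b x y :=
  ENNReal.tsum_le_tsum fun n => by gcongr; exact hab n

lemma subordinateKernel_ne_top {Q : X → X → ℝ≥0∞} (hQ : ∀ x, ∑' y, Q x y ≤ 1) {a : ℕ → ℝ≥0∞}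
    (ha : ∑' n, a n ≠ ∞) (x y : X) : subordinateKernel Q a x y ≠ ∞ :=
  ne_top_of_le_ne_top ha <|
    ENNReal.tsum_le_tsum fun n => mul_le_of_le_one_left' (stepKernel_le_one hQ n x y)

lemma kernelComp_subordinateKernel_ofReal_le (Q : X → X → ℝ≥0∞) {a b c : ℕ → ℝ}
    (ha : ∀ n, 0 ≤ a n) (hb : ∀ n, 0 ≤ b n)
    (hconv : ∀ n, ∑ kl ∈ antidiagonal n, a kl.1 * b kl.2 ≤ c n) (x y : X) :
    kernelComp (subordinateKernel Q fun n => ENNReal.ofReal (a n))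
        (subordinateKernel Q fun n => ENNReal.ofReal (b n)) x y ≤
      subordinateKernel Q (fun n => ENNReal.ofReal (c n)) x y := by
  rw [kernelComp_subordinateKernel]
  refine subordinateKernel_mono Q (fun n => ?_) x y
  calc ∑ kl ∈ antidiagonal n, ENNReal.ofReal (a kl.1) * ENNReal.ofReal (b kl.2)
      = ENNReal.ofReal (∑ kl ∈ antidiagonal n, a kl.1 * b kl.2) := by
        rw [ENNReal.ofReal_sum_of_nonneg fun kl _ => mul_nonneg (ha kl.1) (hb kl.2)]
        simp only [ENNReal.ofReal_mul (ha _)]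
    _ ≤ ENNReal.ofReal (c n) := ENNReal.ofReal_le_ofReal (hconv n)

end Subordination

section RealKernels

variable {X : Type*}

/-- A nonnegative real kernel seen as an `ℝ≥0∞`-valued one, so that series of its entries can be
rearranged freely; negative entries become `0`. -/
noncomputable def ennrealKernel (Q : X → X → ℝ) : X → X → ℝ≥0∞ :=
  fun x y => ENNReal.ofReal (Q x y)

lemma tsum_ennrealKernel_le_one {Q : X → X → ℝ} (hQ_nonneg : ∀ x y, 0 ≤ Q x y)
    (hQ_sum : ∀ x, Summable (Q x)) (hQ_le : ∀ x, ∑' y, Q x y ≤ 1) (x : X) :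
    ∑' y, ennrealKernel Q x y ≤ 1 := by
  simp only [ennrealKernel]
  rw [← ENNReal.ofReal_tsum_of_nonneg (hQ_nonneg x) (hQ_sum x)]
  exact ENNReal.ofReal_le_one.2 (hQ_le x)

variable [DecidableEq X]

lemma toReal_stepKernel_ennrealKernel {Q : X → X → ℝ} (hQ_nonneg : ∀ x y, 0 ≤ Q x y)
    (hQ : ∀ x, ∑' y, ennrealKernel Q x y ≤ 1) (n : ℕ) (x y : X) :
    (stepKernel (ennrealKernel Q) n x y).toReal = kernelPow Q n x y := by
  induction n using Nat.twoStepInduction generalizing x with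
  | zero =>
    simp only [stepKernel, kernelId, kernelPow]
    split_ifs <;> simp
  | one => rw [stepKernel_one, ennrealKernel, ENNReal.toReal_ofReal (hQ_nonneg x y), kernelPow]
  | more n _ ih =>
    simp only [stepKernel_succ _ (n + 1), kernelComp, ennrealKernel, kernelPow]
    rw [ENNReal.tsum_toReal_eq fun z =>
      ENNReal.mul_ne_top ENNReal.ofReal_ne_top (stepKernel_ne_top hQ (n + 1) z y)]
    refine tsum_congr fun z => ?_
    rw [ENNReal.toReal_mul, ih, ENNReal.toReal_ofReal (hQ_nonneg x z)]

lemma toReal_subordinateKernel_ennrealKernel {Q : X → X → ℝ} (hQ_nonneg : ∀ x y, 0 ≤ Q x y)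
    (hQ : ∀ x, ∑' y, ennrealKernel Q x y ≤ 1) {a : ℕ → ℝ} (ha : ∀ n, 0 ≤ a n) (x y : X) :
    (subordinateKernel (ennrealKernel Q) (fun n => ENNReal.ofReal (a n)) x y).toReal =
      ∑' k, kernelPow Q k x y * a k := by
  rw [subordinateKernel, ENNReal.tsum_toReal_eq fun k =>
    ENNReal.mul_ne_top (stepKernel_ne_top hQ k x y) ENNReal.ofReal_ne_top]
  simp only [ENNReal.toReal_mul, toReal_stepKernel_ennrealKernel hQ_nonneg hQ,
    ENNReal.toReal_ofReal (ha _)]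

end RealKernels

section Convolution

lemma sum_antidiagonal_mul_eq_sum_Ico {R : Type*} [NonUnitalNonAssocSemiring R] {a b : ℕ → R}
    (ha : a 0 = 0) (hb : b 0 = 0) (n : ℕ) :
    ∑ kl ∈ antidiagonal n, a kl.1 * b kl.2 = ∑ k ∈ Finset.Ico 1 n, a k * b (n - k) := by
  rw [Finset.Nat.sum_antidiagonal_eq_sum_range_succ fun k l => a k * b l]
  rcases n.eq_zero_or_pos with rfl | hn
  · simp [ha]
  · rw [Finset.sum_range_succ, Finset.range_eq_Ico, Finset.sum_eq_sum_Ico_succ_bot hn]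
    simp [ha, hb]

variable {a : ℕ → ℝ} {C : ℝ}

-- If `a n > 0`, the term `k = n` of `(a ∗ a)(2n)` is positive, which forces `C > 0`.
lemma mul_nonneg_of_sum_Ico_mul_le (ha_nonneg : ∀ n, 0 ≤ a n)
    (hDSP : ∀ n, 2 ≤ n → ∑ k ∈ Finset.Ico 1 n, a k * a (n - k) ≤ C * a n) {n : ℕ} (hn : 1 ≤ n) :
    0 ≤ C * a n := by
  rcases (ha_nonneg n).eq_or_lt with han | han
  · rw [← han, mul_zero]
  have hterm : a n * a (n + n - n) ≤ ∑ k ∈ Finset.Ico 1 (n + n), a k * a (n + n - k) :=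
    Finset.single_le_sum (f := fun k => a k * a (n + n - k))
      (fun k _ => mul_nonneg (ha_nonneg _) (ha_nonneg _)) (Finset.mem_Ico.2 ⟨hn, by lia⟩)
  have hpos : 0 < C * a (n + n) :=
    calc 0 < a n * a (n + n - n) := by rw [Nat.add_sub_cancel]; exact mul_pos han han
      _ ≤ C * a (n + n) := hterm.trans (hDSP _ (by lia))
  exact mul_nonneg (pos_of_mul_pos_left hpos (ha_nonneg _)).le han.le

lemma sum_antidiagonal_mul_le_of_sum_Ico_mul_le (ha_nonneg : ∀ n, 0 ≤ a n) (ha_zero : a 0 = 0)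
    (hDSP : ∀ n, 2 ≤ n → ∑ k ∈ Finset.Ico 1 n, a k * a (n - k) ≤ C * a n) (n : ℕ) :
    ∑ kl ∈ antidiagonal n, a kl.1 * a kl.2 ≤ C * a n := by
  rw [sum_antidiagonal_mul_eq_sum_Ico ha_zero ha_zero]
  match n with
  | 0 => simp [ha_zero]
  | 1 => simpa using mul_nonneg_of_sum_Ico_mul_le ha_nonneg hDSP le_rfl
  | n + 2 => exact hDSP (n + 2) (by lia)

end Convolution

theorem summable_and_tsum_mul_le_of_sum_antidiagonal_mul_le {X : Type*} [DecidableEq X]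
    {Q : X → X → ℝ} (hQ_nonneg : ∀ x y, 0 ≤ Q x y) (hQ_sum : ∀ x, Summable (Q x))
    (hQ_le : ∀ x, ∑' y, Q x y ≤ 1) {a : ℕ → ℝ} (ha_nonneg : ∀ n, 0 ≤ a n) (ha_sum : Summable a)
    {C : ℝ} (hconv : ∀ n, ∑ kl ∈ antidiagonal n, a kl.1 * a kl.2 ≤ C * a n)
    {P : X → X → ℝ} (hP : ∀ x y, P x y = ∑' k, kernelPow Q k x y * a k) (x y : X) :
    Summable (fun z => P x z * P z y) ∧ ∑' z, P x z * P z y ≤ C * P x y := by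
  have hQ := tsum_ennrealKernel_le_one hQ_nonneg hQ_sum hQ_le
  have hCa_nonneg (n : ℕ) : 0 ≤ C * a n :=
    (Finset.sum_nonneg fun kl _ => mul_nonneg (ha_nonneg kl.1) (ha_nonneg kl.2)).trans (hconv n)
  set p := subordinateKernel (ennrealKernel Q) fun n => ENNReal.ofReal (a n)
  set r := subordinateKernel (ennrealKernel Q) fun n => ENNReal.ofReal (C * a n)
  have hp_ne_top : ∀ x y, p x y ≠ ∞ := subordinateKernel_ne_top hQ ha_sum.tsum_ofReal_ne_top
  have hr_ne_top : r x y ≠ ∞ :=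
    subordinateKernel_ne_top hQ (ha_sum.mul_left C).tsum_ofReal_ne_top x y
  have hP_toReal (x y : X) : P x y = (p x y).toReal := by
    rw [hP, toReal_subordinateKernel_ennrealKernel hQ_nonneg hQ ha_nonneg]
  have hr_toReal : (r x y).toReal = C * P x y := by
    rw [toReal_subordinateKernel_ennrealKernel hQ_nonneg hQ hCa_nonneg, hP, ← tsum_mul_left]
    exact tsum_congr fun k => mul_left_comm _ _ _
  have hpr : ∑' z, p x z * p z y ≤ r x y :=
    kernelComp_subordinateKernel_ofReal_le _ ha_nonneg ha_nonneg hconv x y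
  rw [← hr_toReal]
  simp only [hP_toReal, ← ENNReal.toReal_mul]
  refine ⟨ENNReal.summable_toReal (ne_top_of_le_ne_top hr_ne_top hpr), ?_⟩
  rw [← ENNReal.tsum_toReal_eq fun z => ENNReal.mul_ne_top (hp_ne_top x z) (hp_ne_top z y)]
  exact ENNReal.toReal_mono hr_ne_top hpr

theorem stmt14_general {X : Type*} [DecidableEq X]
    (Q : X → X → ℝ)
    (hQ_nonneg : ∀ x y, 0 ≤ Q x y)
    (hQ_sum : ∀ x : X, Summable (Q x))
    (hQ_le : ∀ x : X, ∑' y, Q x y ≤ 1)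
    (a : ℕ → ℝ)
    (ha_nonneg : ∀ n, 0 ≤ a n)
    (ha_zero : a 0 = 0)
    (ha_sum : Summable a)
    (C : ℝ)
    (hDSP_a : ∀ n : ℕ, 2 ≤ n → ∑ k ∈ Finset.Ico 1 n, a k * a (n - k) ≤ C * a n)
    (P : X → X → ℝ)
    (hP : ∀ x y, P x y = ∑' k : ℕ, kernelPow Q k x y * a k) (x y : X) :
    Summable (fun z => P x z * P z y) ∧ ∑' z, P x z * P z y ≤ C * P x y :=
  summable_and_tsum_mul_le_of_sum_antidiagonal_mul_le hQ_nonneg hQ_sum hQ_le ha_nonneg ha_sum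
    (sum_antidiagonal_mul_le_of_sum_Ico_mul_le ha_nonneg ha_zero hDSP_a) hP x y

/-- (Lemma 5.3 of the paper.) Let `X` be countably infinite, `Q` a probability
kernel on `X` with `n`-step kernels `Q_n`, and `a : ℕ → [0,1]` a probability mass function with
`a 0 = 0` (the step distribution of an increasing random walk on `ℕ₀`). If the DSP on `ℕ` holds,
i.e. `(a∗a)(n) ≤ C * a n` for all `n ≥ 2` where `(a∗a)(n) = ∑_{k=1}^{n-1} a k * a (n-k)`,
then the subordinate kernel `P x y = ∑_{k ≥ 1} Q_k x y * a k` satisfies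
`∑_z P x z * P z y ≤ C * P x y` for all `x, y`, with the same constant `C`. -/
theorem stmt14 {X : Type*} [Countable X] [Infinite X] [DecidableEq X]
    (Q : X → X → ℝ)
    (hQ_nonneg : ∀ x y, 0 ≤ Q x y)
    (hQ_sum : ∀ x : X, Summable (Q x))
    (hQ_prob : ∀ x : X, ∑' y, Q x y = 1)
    (a : ℕ → ℝ)
    (ha_nonneg : ∀ n, 0 ≤ a n) (ha_le_one : ∀ n, a n ≤ 1)
    (ha_zero : a 0 = 0)
    (ha_sum : Summable a) (ha_total : ∑' n, a n = 1)
    (C : ℝ)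
    (hDSP_a : ∀ n : ℕ, 2 ≤ n → ∑ k ∈ Finset.Ico 1 n, a k * a (n - k) ≤ C * a n)
    (P : X → X → ℝ)
    (hP : ∀ x y, P x y = ∑' k : ℕ, kernelPow Q k x y * a k) :
    ∀ x y, ∑' z, P x z * P z y ≤ C * P x y :=
  fun x y => (stmt14_general Q hQ_nonneg hQ_sum (fun x => (hQ_prob x).le) a ha_nonneg ha_zero
    ha_sum C hDSP_a P hP x y).2
end

section
/- Fix α ∈ (0,1) and m ≥ 0, and set θ_m = (1+m^{1/α})^α − m and M = log(1+m^{1/α}). Define the probability mass function a_m on ℕ by a_m(k) = (α/(θ_m Γ(1−α))) · (Γ(k−α)/Γ(k+1)) · (1+m^{1/α})^{α−k} for k ≥ 1 and a_m(0) = 0 (the one-step distribution of the discrete (relativistic) α-stable subordinator). Then there exists a constant C = C(α,m) > 0 such that (a_m ∗ a_m)(n) ≤ C a_m(n) for all n ≥ 2, where (a_m ∗ a_m)(n) = ∑_{k=1}^{n−1} a_m(k) a_m(n−k). -/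
/-!
The property is invariant under `a k ↦ c * r ^ k * a k` for `c, r > 0`, so it suffices to treat the
untempered weights `b k = Γ(k - α) / Γ(k + 1)`. Their recurrence
`(k + 1) b (k + 1) = (k - α) b k` says that `k b k` decreases by `α b k` at each step, which bounds
the partial sums of `b`, and that `k (k - α) b k` is increasing, so that `b j` is at most a constant
times `b n` for `n / 2 ≤ j ≤ n`. In a product `b k * b (n - k)` one of the two indices is at least
`n / 2`, so that factor is comparable to `b n`, and the other factors have bounded sum.
-/

open Finset Real

/-- The direct step property (DSP) of a sequence: its self-convolution over the positive indices is
dominated by a multiple of the sequence itself. -/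
def DirectStepProperty (a : ℕ → ℝ) : Prop :=
  ∃ C > 0, ∀ n : ℕ, 2 ≤ n → ∑ k ∈ Ico 1 n, a k * a (n - k) ≤ C * a n

namespace DirectStepProperty

variable {a b : ℕ → ℝ}

theorem congr (hb : DirectStepProperty b) (hab : ∀ k, 1 ≤ k → a k = b k) :
    DirectStepProperty a := by
  obtain ⟨C, hC, hconv⟩ := hb
  refine ⟨C, hC, fun n hn ↦ ?_⟩
  rw [hab n (by lia)]
  refine (sum_congr rfl fun k hk ↦ ?_).trans_le (hconv n hn)
  rw [mem_Ico] at hk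
  rw [hab k hk.1, hab (n - k) (by lia)]

theorem const_mul (hb : DirectStepProperty b) {c : ℝ} (hc : 0 < c) :
    DirectStepProperty fun k ↦ c * b k := by
  obtain ⟨C, hC, hconv⟩ := hb
  refine ⟨c * C, mul_pos hc hC, fun n hn ↦ ?_⟩
  calc ∑ k ∈ Ico 1 n, c * b k * (c * b (n - k))
      = c ^ 2 * ∑ k ∈ Ico 1 n, b k * b (n - k) := by
        rw [mul_sum]
        exact sum_congr rfl fun k _ ↦ by ring
    _ ≤ c ^ 2 * (C * b n) := by gcongr; exact hconv n hn
    _ = c * C * (c * b n) := by ring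

theorem pow_mul (hb : DirectStepProperty b) {r : ℝ} (hr : 0 ≤ r) :
    DirectStepProperty fun k ↦ r ^ k * b k := by
  obtain ⟨C, hC, hconv⟩ := hb
  refine ⟨C, hC, fun n hn ↦ ?_⟩
  calc ∑ k ∈ Ico 1 n, r ^ k * b k * (r ^ (n - k) * b (n - k))
      = r ^ n * ∑ k ∈ Ico 1 n, b k * b (n - k) := by
        rw [mul_sum]
        refine sum_congr rfl fun k hk ↦ ?_
        rw [← pow_mul_pow_sub r (mem_Ico.1 hk).2.le]
        ring
    _ ≤ r ^ n * (C * b n) := by gcongr; exact hconv n hn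
    _ = C * (r ^ n * b n) := by ring

theorem of_le_mul_of_sum_le {D S : ℝ} (hD : 0 < D) (hS : 0 < S) (hb : ∀ k, 1 ≤ k → 0 ≤ b k)
    (hdoubling : ∀ j n, 1 ≤ j → j ≤ n → n ≤ 2 * j → b j ≤ D * b n)
    (hsum : ∀ n, ∑ k ∈ Ico 1 n, b k ≤ S) : DirectStepProperty b := by
  refine ⟨2 * D * S, by positivity, fun n hn ↦ ?_⟩
  have hbn : 0 ≤ b n := hb n (by lia)
  have mul_le : ∀ k ∈ Ico 1 n, b k * b (n - k) ≤ D * b n * (b k + b (n - k)) := by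
    intro k hk
    rw [mem_Ico] at hk
    have hk₀ : 0 ≤ b k := hb k hk.1
    have hnk₀ : 0 ≤ b (n - k) := hb (n - k) (by lia)
    rcases le_total n (2 * k) with h | h
    · calc b k * b (n - k) ≤ D * b n * b (n - k) := by
            gcongr; exact hdoubling k n hk.1 hk.2.le h
        _ ≤ D * b n * (b k + b (n - k)) := by gcongr; exact le_add_of_nonneg_left hk₀
    · calc b k * b (n - k) ≤ b k * (D * b n) := by
            gcongr; exact hdoubling (n - k) n (by lia) (by lia) (by lia)
        _ = D * b n * b k := mul_comm _ _
        _ ≤ D * b n * (b k + b (n - k)) := by gcongr; exact le_add_of_nonneg_right hnk₀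
  have sum_reflect : ∑ k ∈ Ico 1 n, b (n - k) = ∑ k ∈ Ico 1 n, b k := by
    simpa only [Nat.add_sub_cancel_left, Nat.add_sub_cancel] using
      sum_Ico_reflect b 1 n.le_succ
  calc ∑ k ∈ Ico 1 n, b k * b (n - k)
      ≤ ∑ k ∈ Ico 1 n, D * b n * (b k + b (n - k)) := sum_le_sum mul_le
    _ = 2 * D * b n * ∑ k ∈ Ico 1 n, b k := by
        rw [← mul_sum, sum_add_distrib, sum_reflect]
        ring
    _ ≤ 2 * D * b n * S := by gcongr; exact hsum n
    _ = 2 * D * S * b n := by ring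

end DirectStepProperty

/-- The weights `Γ(k - α) / Γ(k + 1)`, to which the step distribution of the discrete `α`-stable
subordinator is proportional on `k ≥ 1`. -/
noncomputable def stableWeight (α : ℝ) (k : ℕ) : ℝ :=
  Gamma (k - α) / Gamma (k + 1)

section StableWeight

variable {α : ℝ}

theorem stableWeight_one (α : ℝ) : stableWeight α 1 = Gamma (1 - α) := by
  simp [stableWeight, one_add_one_eq_two]

theorem stableWeight_pos {k : ℕ} (hα : α < k) : 0 < stableWeight α k :=
  div_pos (Gamma_pos_of_pos (sub_pos.2 hα)) (Gamma_pos_of_pos k.cast_add_one_pos)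

theorem succ_mul_stableWeight_succ {k : ℕ} (hα : α ≠ k) :
    (k + 1) * stableWeight α (k + 1) = (k - α) * stableWeight α k := by
  have hΓ : Gamma (k + 1) ≠ 0 := (Gamma_pos_of_pos k.cast_add_one_pos).ne'
  have hk : (k : ℝ) + 1 ≠ 0 := k.cast_add_one_ne_zero
  rw [stableWeight, stableWeight, Nat.cast_succ, Gamma_add_one hk, add_sub_right_comm,
    Gamma_add_one (sub_ne_zero.2 hα.symm)]
  field_simp

theorem mul_sum_Ico_stableWeight (hα : α < 1) {n : ℕ} (hn : 1 ≤ n) :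
    α * ∑ k ∈ Ico 1 n, stableWeight α k = Gamma (1 - α) - n * stableWeight α n := by
  induction n, hn using Nat.le_induction with
  | base => simp [stableWeight_one]
  | succ n hn ih =>
    have hrec := succ_mul_stableWeight_succ (hα.trans_le (Nat.one_le_cast.2 hn)).ne
    rw [sum_Ico_succ_top hn, mul_add, ih, Nat.cast_succ, hrec]
    ring

theorem sum_Ico_stableWeight_le (hα₀ : 0 < α) (hα₁ : α < 1) (n : ℕ) :
    ∑ k ∈ Ico 1 n, stableWeight α k ≤ Gamma (1 - α) / α := by
  rcases n.eq_zero_or_pos with rfl | hn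
  · simpa using (div_pos (Gamma_pos_of_pos (sub_pos.2 hα₁)) hα₀).le
  · have hpos : 0 < stableWeight α n := stableWeight_pos (hα₁.trans_le (Nat.one_le_cast.2 hn))
    rw [le_div_iff₀' hα₀, mul_sum_Ico_stableWeight hα₁ hn]
    exact sub_le_self _ (by positivity)

theorem monotone_mul_sub_mul_stableWeight (hα₀ : 0 < α) (hα₁ : α < 1) :
    Monotone fun k : ℕ ↦ k * (k - α) * stableWeight α k := by
  refine monotone_nat_of_le_succ fun k ↦ ?_
  have hk : 0 ≤ stableWeight α (k + 1) := (stableWeight_pos (by push_cast; linarith)).le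
  have hrec : (k + 1) * stableWeight α (k + 1) = (k - α) * stableWeight α k := by
    refine succ_mul_stableWeight_succ ?_
    rcases k.eq_zero_or_pos with rfl | hk₀
    · simpa using hα₀.ne'
    · exact (hα₁.trans_le (Nat.one_le_cast.2 hk₀)).ne
  calc k * (k - α) * stableWeight α k
      = k * ((k + 1) * stableWeight α (k + 1)) := by rw [hrec, mul_assoc]
    _ ≤ (k + 1 - α) * ((k + 1) * stableWeight α (k + 1)) := by gcongr; linarith
    _ = (k + 1 : ℕ) * ((k + 1 : ℕ) - α) * stableWeight α (k + 1) := by push_cast; ring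

theorem stableWeight_le_of_le_two_mul (hα₀ : 0 < α) (hα₁ : α < 1) {j n : ℕ} (hj : 1 ≤ j)
    (hjn : j ≤ n) (hn : n ≤ 2 * j) :
    stableWeight α j ≤ 2 * (2 - α) / (1 - α) * stableWeight α n := by
  have hj' : (1 : ℝ) ≤ j := Nat.one_le_cast.2 hj
  have hjn' : (j : ℝ) ≤ n := Nat.cast_le.2 hjn
  have hn' : (n : ℝ) ≤ 2 * j := mod_cast hn
  have hα : 0 < 1 - α := sub_pos.2 hα₁
  have hjα : 0 < j - α := by linarith
  have hpos : 0 < stableWeight α n := stableWeight_pos (by linarith)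
  have sub_le : n - α ≤ (2 - α) / (1 - α) * (j - α) := by
    rw [div_mul_eq_mul_div, le_div_iff₀ hα]
    calc (n - α) * (1 - α) ≤ (2 * j - α) * (1 - α) := by gcongr
      _ = (2 - α) * (j - α) - α * (j - 1) := by ring
      _ ≤ (2 - α) * (j - α) := sub_le_self _ (mul_nonneg hα₀.le (sub_nonneg.2 hj'))
  refine le_of_mul_le_mul_left ?_ (by positivity : 0 < j * (j - α))
  calc j * (j - α) * stableWeight α j
      ≤ n * (n - α) * stableWeight α n := monotone_mul_sub_mul_stableWeight hα₀ hα₁ hjn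
    _ ≤ 2 * j * ((2 - α) / (1 - α) * (j - α)) * stableWeight α n := by gcongr; linarith
    _ = j * (j - α) * (2 * (2 - α) / (1 - α) * stableWeight α n) := by ring

theorem directStepProperty_stableWeight (hα₀ : 0 < α) (hα₁ : α < 1) :
    DirectStepProperty (stableWeight α) := by
  have hα : 0 < 1 - α := sub_pos.2 hα₁
  have hα' : 0 < 2 - α := by linarith
  exact .of_le_mul_of_sum_le (D := 2 * (2 - α) / (1 - α)) (S := Gamma (1 - α) / α)
    (by positivity) (div_pos (Gamma_pos_of_pos hα) hα₀)
    (fun k hk ↦ (stableWeight_pos (hα₁.trans_le (Nat.one_le_cast.2 hk))).le)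
    (fun _ _ ↦ stableWeight_le_of_le_two_mul hα₀ hα₁) (sum_Ico_stableWeight_le hα₀ hα₁)

end StableWeight

theorem lt_one_add_rpow_one_div_rpow {α m : ℝ} (hα : 0 < α) (hm : 0 ≤ m) :
    m < (1 + m ^ (1 / α)) ^ α := by
  rw [one_div, ← rpow_inv_lt_iff_of_pos hm (by positivity) hα]
  exact lt_one_add _

/-- (Proposition 5.6 of the paper.) Fix `α ∈ (0,1)` and `m ≥ 0`, and set
`θ_m = (1 + m^(1/α))^α - m` and `M = log (1 + m^(1/α))`. Let
`a_m k = (α/(θ_m Γ(1-α))) * (Γ(k-α)/Γ(k+1)) * (1 + m^(1/α))^(α-k)` for `k ≥ 1`, `a_m 0 = 0`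
(the one-step distribution of the discrete (relativistic) `α`-stable subordinator). Then there
is `C = C(α,m) > 0` such that `(a_m ∗ a_m)(n) ≤ C * a_m n` for all `n ≥ 2`. -/
theorem stmt18 (α m : ℝ) (hα0 : 0 < α) (hα1 : α < 1) (hm : 0 ≤ m)
    (a : ℕ → ℝ) (ha_zero : a 0 = 0)
    (ha : ∀ k : ℕ, 1 ≤ k →
      a k = (α / (((1 + m ^ (1 / α)) ^ α - m) * Real.Gamma (1 - α))) *
        (Real.Gamma ((k : ℝ) - α) / Real.Gamma ((k : ℝ) + 1)) *
        (1 + m ^ (1 / α)) ^ (α - (k : ℝ))) :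
    ∃ C > 0, ∀ n : ℕ, 2 ≤ n → ∑ k ∈ Finset.Ico 1 n, a k * a (n - k) ≤ C * a n := by
  set q := 1 + m ^ (1 / α)
  set c := α / ((q ^ α - m) * Gamma (1 - α))
  have hq : 0 < q := by positivity
  have hc : 0 < c := by
    have hθ : 0 < q ^ α - m := sub_pos.2 (lt_one_add_rpow_one_div_rpow hα0 hm)
    exact div_pos hα0 (mul_pos hθ (Gamma_pos_of_pos (sub_pos.2 hα1)))
  have hdsp : DirectStepProperty fun k ↦ c * q ^ α * (q⁻¹ ^ k * stableWeight α k) :=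
    ((directStepProperty_stableWeight hα0 hα1).pow_mul (by positivity)).const_mul (by positivity)
  refine hdsp.congr fun k hk ↦ ?_
  rw [ha k hk, rpow_sub_natCast hq.ne', inv_pow, stableWeight]
  ring
end

section
/- Fix α ∈ (0,1) and parameters β, γ > 1. Let X be countably infinite with an integer-valued metric d : X × X → ℕ₀, and let g : ℕ × X × X → [0,∞) satisfy the two-sided sub-Gaussian bounds: there are constants c₁,…,c₄ > 0 such that for all x,y ∈ X and all n ∈ ℕ with n ≥ d(x,y), g_n(x,y) ≤ (c₁/n^{γ/β}) exp( −c₂ (d(x,y)/n^{1/β})^{β/(β−1)} ) and g_n(x,y) + g_{n+1}(x,y) ≥ (c₃/n^{γ/β}) exp( −c₄ (d(x,y)/n^{1/β})^{β/(β−1)} ). Let a_0(k) = (α/Γ(1−α)) Γ(k−α)/Γ(k+1), k ≥ 1, and define p(x,y) = ∑_{n = max(1, d(x,y))}^{∞} g_n(x,y) a_0(n). Then there exists a constant C ≥ 1 such that (1/C) (1+d(x,y))^{−(αβ+γ)} ≤ p(x,y) ≤ C (1+d(x,y))^{−(αβ+γ)} for all x,y ∈ X. -/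
/-!
Write `R = (1 + D)^β` and `s = γ/β + 1 + α`, so that `R^(1 - s) = (1 + D)^(-(αβ + γ))`. Since `a₀ n`
is comparable to `n^(-(1 + α))`, the `n`-th summand of `p` is at most a multiple of `n^(-s)` times a
stretched exponential in `D / n^(1/β)`. Trading the exponential for the power
`(1 + D / n^(1/β))^(-βs)` turns this into `(n^(1/β) + D)^(-βs)`, at most a multiple of
`(n + R)^(-s)`, whose sum over `n` is of order `R^(1 - s)`. Conversely, for the roughly `R` times
`n` between `R` and `2 * R` the exponential is bounded below, so two consecutive summands together
are at least a multiple of `R^(-s)`; these alone contribute order `R^(1 - s)`.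
-/

open Finset Real Set

section Gamma

theorem Gamma_add_le_rpow_mul_Gamma {x s : ℝ} (hx : 0 < x) (hs0 : 0 < s) (hs1 : s < 1) :
    Gamma (x + s) ≤ x ^ s * Gamma x := by
  have hΓ : 0 < Gamma x := Gamma_pos_of_pos hx
  have hconvex := Gamma_mul_add_mul_le_rpow_Gamma_mul_rpow_Gamma hx (by linarith : 0 < x + 1)
    (sub_pos.2 hs1) hs0 (sub_add_cancel 1 s)
  calc Gamma (x + s) = Gamma ((1 - s) * x + s * (x + 1)) := by ring_nf
    _ ≤ Gamma x ^ (1 - s) * Gamma (x + 1) ^ s := hconvex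
    _ = x ^ s * (Gamma x ^ (1 - s) * Gamma x ^ s) := by
      rw [Gamma_add_one hx.ne', mul_rpow hx.le hΓ.le]; ring
    _ = x ^ s * Gamma x := by rw [← rpow_add hΓ, sub_add_cancel, rpow_one]

variable {α x : ℝ}

theorem rpow_neg_le_Gamma_sub_div_Gamma_add_one (hα0 : 0 < α) (hα1 : α < 1) (hx : α < x) :
    x ^ (-(1 + α)) ≤ Gamma (x - α) / Gamma (x + 1) := by
  have hx0 : 0 < x := hα0.trans hx
  have : 0 < Gamma (x - α) := Gamma_pos_of_pos (sub_pos.2 hx)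
  rw [rpow_neg hx0.le, le_div_iff₀ (Gamma_pos_of_pos (by linarith)),
    inv_mul_le_iff₀ (by positivity)]
  calc Gamma (x + 1) = x * Gamma (x - α + α) := by rw [Gamma_add_one hx0.ne', sub_add_cancel]
    _ ≤ x * ((x - α) ^ α * Gamma (x - α)) := by
      gcongr; exact Gamma_add_le_rpow_mul_Gamma (sub_pos.2 hx) hα0 hα1
    _ ≤ x * (x ^ α * Gamma (x - α)) := by
      gcongr; exact sub_le_self x hα0.le
    _ = x ^ (1 + α) * Gamma (x - α) := by rw [rpow_add hx0, rpow_one, mul_assoc]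

theorem Gamma_sub_div_Gamma_add_one_le (hα0 : 0 < α) (hα1 : α < 1) (hx : 1 ≤ x) :
    Gamma (x - α) / Gamma (x + 1) ≤ (1 - α)⁻¹ * x ^ (-(1 + α)) := by
  have hx0 : 0 < x := one_pos.trans_le hx
  have hxα : 0 < x - α := by linarith
  have : 0 < Gamma (x - α) := Gamma_pos_of_pos hxα
  have hlinear : (1 - α) * x ≤ x - α := by nlinarith
  have hscaled : (1 - α) * x * Gamma (x - α) ≤ x * (x ^ (-(1 + α)) * Gamma (x + 1)) :=
    calc (1 - α) * x * Gamma (x - α) ≤ (x - α) * Gamma (x - α) := by gcongr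
      _ = Gamma (x + (1 - α)) := by rw [← Gamma_add_one hxα.ne']; ring_nf
      _ ≤ x ^ (1 - α) * Gamma x :=
        Gamma_add_le_rpow_mul_Gamma hx0 (sub_pos.2 hα1) (sub_lt_self 1 hα0)
      _ = x * (x ^ (-(1 + α)) * Gamma (x + 1)) := by
        rw [Gamma_add_one hx0.ne', show 1 - α = 1 + 1 + -(1 + α) by ring, rpow_add hx0,
          rpow_add hx0, rpow_one]
        ring
  rw [div_le_iff₀ (Gamma_pos_of_pos (by linarith)), mul_assoc, le_inv_mul_iff₀ (sub_pos.2 hα1)]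
  refine le_of_mul_le_mul_left ?_ hx0
  linarith

end Gamma

/-- The one-step distribution `a₀` of the discrete `α`-stable subordinator at `k ≥ 1`.
At `k = 0` the formula gives `-1` and does not describe `a₀`. -/
noncomputable def stableStep (α : ℝ) (k : ℕ) : ℝ :=
  α / Gamma (1 - α) * (Gamma ((k : ℝ) - α) / Gamma ((k : ℝ) + 1))

theorem exists_stableStep_mem_Icc {α : ℝ} (hα0 : 0 < α) (hα1 : α < 1) :
    ∃ A B : ℝ, 0 < A ∧ 0 < B ∧ ∀ k : ℕ, 1 ≤ k →
      stableStep α k ∈ Icc (A * (k : ℝ) ^ (-(1 + α))) (B * (k : ℝ) ^ (-(1 + α))) := by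
  have hα : 0 < 1 - α := sub_pos.2 hα1
  have hA : 0 < α / Gamma (1 - α) := div_pos hα0 (Gamma_pos_of_pos hα)
  refine ⟨α / Gamma (1 - α), α / Gamma (1 - α) * (1 - α)⁻¹, hA, by positivity, fun k hk ↦ ?_⟩
  have hk' : (1 : ℝ) ≤ k := mod_cast hk
  refine ⟨mul_le_mul_of_nonneg_left
    (rpow_neg_le_Gamma_sub_div_Gamma_add_one hα0 hα1 (hα1.trans_le hk')) hA.le, ?_⟩
  rw [mul_assoc]
  exact mul_le_mul_of_nonneg_left (Gamma_sub_div_Gamma_add_one_le hα0 hα1 hk') hA.le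

section Decay

theorem exists_one_add_rpow_le_mul_exp {c r : ℝ} (hc : 0 < c) (hr : 0 < r) :
    ∃ K : ℝ, 0 < K ∧ ∀ v : ℝ, 0 ≤ v → (1 + v) ^ r ≤ K * exp (c * v) := by
  refine ⟨max 1 (r / c) ^ r, by positivity, fun v hv ↦ ?_⟩
  have hlinear : 1 + v ≤ max 1 (r / c) * exp (c * v / r) :=
    calc 1 + v = 1 * 1 + r / c * (c * v / r) := by field_simp
      _ ≤ max 1 (r / c) * 1 + max 1 (r / c) * (c * v / r) := by
        gcongr
        · exact le_max_left _ _
        · exact le_max_right _ _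
      _ = max 1 (r / c) * (c * v / r + 1) := by ring
      _ ≤ max 1 (r / c) * exp (c * v / r) := by gcongr; exact add_one_le_exp _
  calc (1 + v) ^ r ≤ (max 1 (r / c) * exp (c * v / r)) ^ r := by gcongr
    _ = max 1 (r / c) ^ r * exp (c * v) := by
      rw [mul_rpow (by positivity) (exp_pos _).le, ← exp_mul, div_mul_cancel₀ _ hr.ne']

theorem one_add_le_two_mul_one_add_rpow {u δ : ℝ} (hu : 0 ≤ u) (hδ : 0 < δ) :
    1 + u ≤ 2 * (1 + u ^ δ) ^ (1 / δ) := by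
  have hpow : 0 ≤ u ^ δ := by positivity
  have hone : 1 ≤ (1 + u ^ δ) ^ (1 / δ) := one_le_rpow (by linarith) (by positivity)
  have hself : u ≤ (1 + u ^ δ) ^ (1 / δ) :=
    calc u = (u ^ δ) ^ (1 / δ) := by rw [← rpow_mul hu, mul_one_div_cancel hδ.ne', rpow_one]
      _ ≤ (1 + u ^ δ) ^ (1 / δ) := by gcongr; linarith
  linarith

theorem exists_exp_neg_mul_rpow_le {c δ r : ℝ} (hc : 0 < c) (hδ : 0 < δ) (hr : 0 < r) :
    ∃ K : ℝ, 0 < K ∧ ∀ u : ℝ, 0 ≤ u → exp (-(c * u ^ δ)) ≤ K * (1 + u) ^ (-r) := by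
  obtain ⟨K, hK, hexp⟩ := exists_one_add_rpow_le_mul_exp hc (div_pos hr hδ)
  refine ⟨2 ^ r * K, by positivity, fun u hu ↦ ?_⟩
  have hpow : (1 + u) ^ r ≤ 2 ^ r * K * exp (c * u ^ δ) :=
    calc (1 + u) ^ r ≤ (2 * (1 + u ^ δ) ^ (1 / δ)) ^ r := by
          gcongr; exact one_add_le_two_mul_one_add_rpow hu hδ
      _ = 2 ^ r * (1 + u ^ δ) ^ (r / δ) := by
        rw [mul_rpow (by positivity) (by positivity), ← rpow_mul (by positivity),
          one_div_mul_eq_div]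
      _ ≤ 2 ^ r * (K * exp (c * u ^ δ)) := by gcongr; exact hexp _ (by positivity)
      _ = 2 ^ r * K * exp (c * u ^ δ) := by ring
  rw [exp_neg, rpow_neg (by positivity), ← div_eq_mul_inv, le_div_iff₀ (by positivity),
    inv_mul_le_iff₀ (exp_pos _), mul_comm (exp _)]
  exact hpow

theorem add_one_add_one_add_rpow_le {β r t : ℝ} (hβ : 0 < β) (hr : 0 ≤ r) (ht : 1 ≤ t) :
    t + 1 + (1 + r) ^ β ≤ 3 * (t ^ (1 / β) + r) ^ β := by
  have hroot : 1 ≤ t ^ (1 / β) := one_le_rpow ht (by positivity)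
  have htime : t ≤ (t ^ (1 / β) + r) ^ β :=
    calc t = (t ^ (1 / β)) ^ β := by rw [one_div, rpow_inv_rpow (by linarith) hβ.ne']
      _ ≤ (t ^ (1 / β) + r) ^ β := by gcongr; linarith
  have hdist : (1 + r) ^ β ≤ (t ^ (1 / β) + r) ^ β := by gcongr
  linarith

theorem rpow_neg_mul_one_add_div_rpow {β r t : ℝ} (s : ℝ) (hβ : 0 < β) (hr : 0 ≤ r) (ht : 0 < t) :
    t ^ (-s) * (1 + r / t ^ (1 / β)) ^ (-(β * s)) = ((t ^ (1 / β) + r) ^ β) ^ (-s) := by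
  have hfactor : (t ^ (1 / β) + r) ^ β = t * (1 + r / t ^ (1 / β)) ^ β :=
    calc (t ^ (1 / β) + r) ^ β = (t ^ (1 / β) * (1 + r / t ^ (1 / β))) ^ β := by
          rw [mul_add, mul_div_cancel₀ _ (by positivity), mul_one]
      _ = t * (1 + r / t ^ (1 / β)) ^ β := by
        rw [mul_rpow (by positivity) (by positivity), one_div, rpow_inv_rpow ht.le hβ.ne']
  rw [hfactor, mul_rpow ht.le (by positivity), ← rpow_mul (by positivity), mul_neg]

theorem exists_rpow_neg_mul_exp_le {β δ c s : ℝ} (hβ : 0 < β) (hδ : 0 < δ) (hc : 0 < c)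
    (hs : 0 < s) :
    ∃ K : ℝ, 0 < K ∧ ∀ r t : ℝ, 0 ≤ r → 1 ≤ t →
      t ^ (-s) * exp (-(c * (r / t ^ (1 / β)) ^ δ)) ≤ K * (t + 1 + (1 + r) ^ β) ^ (-s) := by
  obtain ⟨K, hK, hexp⟩ := exists_exp_neg_mul_rpow_le hc hδ (mul_pos hβ hs)
  refine ⟨K * 3 ^ s, by positivity, fun r t hr ht ↦ ?_⟩
  have ht0 : 0 < t := one_pos.trans_le ht
  calc t ^ (-s) * exp (-(c * (r / t ^ (1 / β)) ^ δ))
      ≤ t ^ (-s) * (K * (1 + r / t ^ (1 / β)) ^ (-(β * s))) := by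
        gcongr; exact hexp _ (by positivity)
    _ = K * ((t ^ (1 / β) + r) ^ β) ^ (-s) := by
      rw [mul_left_comm, rpow_neg_mul_one_add_div_rpow s hβ hr ht0]
    _ = K * 3 ^ s * (3 * (t ^ (1 / β) + r) ^ β) ^ (-s) := by
      rw [mul_rpow (by norm_num) (by positivity), mul_assoc K, ← mul_assoc (3 ^ s),
        ← rpow_add (by norm_num), add_neg_cancel, rpow_zero, one_mul]
    _ ≤ K * 3 ^ s * (t + 1 + (1 + r) ^ β) ^ (-s) := by
      gcongr ?_ * ?_
      exact rpow_le_rpow_of_nonpos (by positivity) (add_one_add_one_add_rpow_le hβ hr ht)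
        (by linarith)

end Decay

section Sums

theorem sum_range_add_one_add_rpow_neg_le {s R : ℝ} (hs : 1 < s) (hR : 0 < R) (m : ℕ) :
    ∑ i ∈ range m, ((i : ℝ) + 1 + R) ^ (-s) ≤ R ^ (1 - s) / (s - 1) := by
  have hanti : AntitoneOn (fun x : ℝ ↦ x ^ (-s)) (Icc R (R + m)) := fun x hx y _ hxy ↦
    rpow_le_rpow_of_nonpos (hR.trans_le hx.1) hxy (by linarith)
  have hzero : (0 : ℝ) ∉ uIcc R (R + m) := by
    rw [Set.uIcc_of_le (by simp)]
    exact fun h ↦ hR.not_ge h.1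
  calc ∑ i ∈ range m, ((i : ℝ) + 1 + R) ^ (-s)
      = ∑ i ∈ range m, (R + ((i + 1 : ℕ) : ℝ)) ^ (-s) := by
        simp only [Nat.cast_add, Nat.cast_one, add_comm R]
    _ ≤ ∫ x in R..R + m, x ^ (-s) := hanti.sum_le_integral
    _ = (R ^ (1 - s) - (R + m) ^ (1 - s)) / (s - 1) := by
      rw [integral_rpow (Or.inr ⟨by linarith, hzero⟩), neg_add_eq_sub, ← neg_sub s 1, div_neg,
        ← neg_div, neg_sub]
    _ ≤ R ^ (1 - s) / (s - 1) := by
      have hlast : 0 ≤ (R + m) ^ (1 - s) := by positivity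
      exact div_le_div_of_nonneg_right (sub_le_self _ hlast) (sub_pos.2 hs).le

theorem summable_and_tsum_le_of_le_rpow_neg {f : ℕ → ℝ} {K R s : ℝ} (hs : 1 < s) (hR : 0 < R)
    (hK : 0 ≤ K) (hf : ∀ n, 0 ≤ f n) (hle : ∀ n, f n ≤ K * ((n : ℝ) + 1 + R) ^ (-s)) :
    Summable f ∧ ∑' n, f n ≤ K / (s - 1) * R ^ (1 - s) := by
  have hpartial (m : ℕ) : ∑ n ∈ range m, f n ≤ K / (s - 1) * R ^ (1 - s) :=
    calc ∑ n ∈ range m, f n ≤ ∑ n ∈ range m, K * ((n : ℝ) + 1 + R) ^ (-s) :=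
          sum_le_sum fun n _ ↦ hle n
      _ ≤ K * (R ^ (1 - s) / (s - 1)) := by
        rw [← mul_sum]
        gcongr
        exact sum_range_add_one_add_rpow_neg_le hs hR m
      _ = K / (s - 1) * R ^ (1 - s) := by ring
  exact ⟨summable_of_sum_range_le hf hpartial, Real.tsum_le_of_sum_range_le hf hpartial⟩

theorem card_mul_le_two_mul_tsum {f : ℕ → ℝ} {m : ℝ} (hf : ∀ n, 0 ≤ f n) (hsum : Summable f)
    (S : Finset ℕ) (hm : ∀ n ∈ S, m ≤ f n + f (n + 1)) : #S * m ≤ 2 * ∑' n, f n := by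
  have hshift : ∑ n ∈ S, f (n + 1) ≤ ∑' n, f n := by
    simpa only [sum_map, addRightEmbedding_apply] using
      hsum.sum_le_tsum (S.map (addRightEmbedding 1)) fun n _ ↦ hf n
  calc #S * m ≤ ∑ n ∈ S, (f n + f (n + 1)) := by
        rw [← nsmul_eq_mul]; exact card_nsmul_le_sum S _ m hm
    _ = ∑ n ∈ S, f n + ∑ n ∈ S, f (n + 1) := sum_add_distrib
    _ ≤ ∑' n, f n + ∑' n, f n := add_le_add (hsum.sum_le_tsum S fun n _ ↦ hf n) hshift
    _ = 2 * ∑' n, f n := (two_mul _).symm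

theorem mul_le_two_mul_tsum_of_le_add {f : ℕ → ℝ} {m R : ℝ} (hf : ∀ n, 0 ≤ f n)
    (hsum : Summable f) (hR : 1 ≤ R) (hm0 : 0 ≤ m)
    (hm : ∀ n : ℕ, R ≤ n → (n : ℝ) + 1 ≤ 4 * R → m ≤ f n + f (n + 1)) :
    R * m ≤ 2 * ∑' n, f n := by
  set N : ℕ := ⌈R⌉₊
  have hRN : R ≤ N := Nat.le_ceil R
  have hNR : (N : ℝ) < R + 1 := Nat.ceil_lt_add_one (by linarith)
  calc R * m ≤ N * m := by gcongr
    _ = #(Finset.Ico N (2 * N)) * m := by rw [Nat.card_Ico, two_mul, Nat.add_sub_cancel]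
    _ ≤ 2 * ∑' n, f n := by
      refine card_mul_le_two_mul_tsum hf hsum _ fun n hn ↦ hm n ?_ ?_
      · exact hRN.trans (mod_cast (Finset.mem_Ico.1 hn).1)
      · have hn' : (n : ℝ) + 1 ≤ 2 * N := mod_cast (Finset.mem_Ico.1 hn).2
        linarith

end Sums

theorem rpow_neg_abs_mul_rpow_neg_le {b R x : ℝ} (t : ℝ) (hR : 0 < R) (hRx : R ≤ x)
    (hxb : x ≤ b * R) : b ^ (-|t|) * R ^ (-t) ≤ x ^ (-t) := by
  have hratio : 1 ≤ x / R := (one_le_div hR).2 hRx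
  calc b ^ (-|t|) * R ^ (-t) ≤ (x / R) ^ (-|t|) * R ^ (-t) := by
        gcongr ?_ * _
        exact rpow_le_rpow_of_nonpos (by positivity) ((div_le_iff₀ hR).2 hxb)
          (neg_nonpos.2 (abs_nonneg t))
    _ ≤ (x / R) ^ (-t) * R ^ (-t) := by gcongr; exact le_abs_self t
    _ = x ^ (-t) := by rw [← mul_rpow (by positivity) hR.le, div_mul_cancel₀ _ hR.ne']

/-- The sub-Gaussian profile at distance `r` and time `t`: volume growth exponent `γ`, walk
dimension `β`, and a stretched exponential of exponent `δ`, which is `β / (β - 1)` for heat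
kernels. -/
noncomputable def subGaussian (β γ δ C c r t : ℝ) : ℝ :=
  C / t ^ (γ / β) * exp (-(c * (r / t ^ (1 / β)) ^ δ))

/-- The summands of the subordinated density `∑_{n ≥ 1 ∨ D} g n * a n`, extended by zero to all
times; `g` is the time-dependent density at distance `D` and `a` the step distribution of the
subordinator. -/
noncomputable def subordinationTerm (D : ℕ) (g a : ℕ → ℝ) (n : ℕ) : ℝ :=
  if max 1 D ≤ n then g n * a n else 0

section Subordination

variable {α β γ δ A B C c : ℝ} {D : ℕ} {g a : ℕ → ℝ}

theorem subordinationTerm_of_le {n : ℕ} (hn : 1 ≤ n) (hD : D ≤ n) :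
    subordinationTerm D g a n = g n * a n :=
  if_pos (max_le hn hD)

theorem subordinationTerm_nonneg (hg : ∀ n, 0 ≤ g n) (ha : ∀ n, 1 ≤ n → 0 ≤ a n) (n : ℕ) :
    0 ≤ subordinationTerm D g a n := by
  unfold subordinationTerm
  split_ifs with h
  · exact mul_nonneg (hg n) (ha n (le_of_max_le_left h))
  · exact le_rfl

theorem exists_subordinationTerm_le (hβ : 0 < β) (hδ : 0 < δ) (hs : 0 < γ / β + (1 + α))
    (hC : 0 ≤ C) (hc : 0 < c) (hB : 0 ≤ B) :
    ∃ K : ℝ, 0 ≤ K ∧ ∀ (D : ℕ) (g a : ℕ → ℝ), (∀ n, 0 ≤ g n) →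
      (∀ n : ℕ, 1 ≤ n → D ≤ n → g n ≤ subGaussian β γ δ C c D n) →
      (∀ n : ℕ, 1 ≤ n → a n ≤ B * (n : ℝ) ^ (-(1 + α))) →
      ∀ n : ℕ, subordinationTerm D g a n ≤
        K * ((n : ℝ) + 1 + (1 + (D : ℝ)) ^ β) ^ (-(γ / β + (1 + α))) := by
  obtain ⟨K, hK, hdecay⟩ := exists_rpow_neg_mul_exp_le hβ hδ hc hs
  refine ⟨C * B * K, by positivity, fun D g a hg0 hg ha n ↦ ?_⟩
  by_cases h : max 1 D ≤ n
  · have hn : 1 ≤ n := le_of_max_le_left h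
    have hD : D ≤ n := le_of_max_le_right h
    have hn0 : (0 : ℝ) < n := mod_cast hn
    calc subordinationTerm D g a n = g n * a n := subordinationTerm_of_le hn hD
      _ ≤ g n * (B * (n : ℝ) ^ (-(1 + α))) := by gcongr; exacts [hg0 n, ha n hn]
      _ ≤ subGaussian β γ δ C c D n * (B * (n : ℝ) ^ (-(1 + α))) := by gcongr; exact hg n hn hD
      _ = C * B * ((n : ℝ) ^ (-(γ / β + (1 + α))) *
            exp (-(c * ((D : ℝ) / (n : ℝ) ^ (1 / β)) ^ δ))) := by
        rw [subGaussian, div_eq_mul_inv, ← rpow_neg hn0.le, neg_add (γ / β),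
          rpow_add hn0 (-(γ / β))]
        ring
      _ ≤ C * B * (K * ((n : ℝ) + 1 + (1 + (D : ℝ)) ^ β) ^ (-(γ / β + (1 + α)))) := by
        gcongr ?_ * ?_
        exact hdecay D n (by positivity) (mod_cast hn)
      _ = _ := by ring
  · rw [subordinationTerm, if_neg h]
    positivity

theorem mul_rpow_neg_mul_exp_neg_le_subGaussian {b r R t : ℝ} (hβ : 0 < β) (hδ : 0 ≤ δ)
    (hC : 0 ≤ C) (hc : 0 ≤ c) (hr : 0 ≤ r) (hR : 0 < R) (hrR : r ^ β ≤ R) (hRt : R ≤ t)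
    (htb : t ≤ b * R) :
    C * (b ^ (-|γ / β|) * R ^ (-(γ / β))) * exp (-c) ≤ subGaussian β γ δ C c r t := by
  have ht : 0 < t := hR.trans_le hRt
  have hroot : r ≤ t ^ (1 / β) := by
    rw [one_div, le_rpow_inv_iff_of_pos hr ht.le hβ]
    exact hrR.trans hRt
  have hpow : (r / t ^ (1 / β)) ^ δ ≤ 1 :=
    rpow_le_one (by positivity) ((div_le_one (by positivity)).2 hroot) hδ
  calc C * (b ^ (-|γ / β|) * R ^ (-(γ / β))) * exp (-c) ≤ C * t ^ (-(γ / β)) * exp (-c) := by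
        gcongr; exact rpow_neg_abs_mul_rpow_neg_le _ hR hRt htb
    _ ≤ C * t ^ (-(γ / β)) * exp (-(c * (r / t ^ (1 / β)) ^ δ)) := by
      gcongr; exact mul_le_of_le_one_right hc hpow
    _ = subGaussian β γ δ C c r t := by rw [subGaussian, rpow_neg ht.le, ← div_eq_mul_inv]

theorem exists_le_subordinationTerm_add_succ (hβ : 1 ≤ β) (hδ : 0 ≤ δ) (hC : 0 < C) (hc : 0 ≤ c)
    (hA : 0 < A) :
    ∃ L : ℝ, 0 < L ∧ ∀ (D : ℕ) (g a : ℕ → ℝ), (∀ n, 0 ≤ g n) →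
      (∀ n : ℕ, 1 ≤ n → D ≤ n → subGaussian β γ δ C c D n ≤ g n + g (n + 1)) →
      (∀ n : ℕ, 1 ≤ n → A * (n : ℝ) ^ (-(1 + α)) ≤ a n) →
      ∀ n : ℕ, (1 + (D : ℝ)) ^ β ≤ n → (n : ℝ) + 1 ≤ 4 * (1 + (D : ℝ)) ^ β →
        L * ((1 + (D : ℝ)) ^ β) ^ (-(γ / β + (1 + α))) ≤
          subordinationTerm D g a n + subordinationTerm D g a (n + 1) := by
  refine ⟨C * 4 ^ (-|γ / β|) * exp (-c) * (A * 4 ^ (-|1 + α|)), by positivity,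
    fun D g a hg0 hg ha n hRn hnR ↦ ?_⟩
  set R : ℝ := (1 + (D : ℝ)) ^ β with hRdef
  have hβ0 : 0 < β := one_pos.trans_le hβ
  have hR : 0 < R := by positivity
  have hDR : 1 + (D : ℝ) ≤ R := self_le_rpow_of_one_le (by simp) hβ
  have hDn : 1 + D ≤ n := mod_cast hDR.trans hRn
  have hg_lower : C * (4 ^ (-|γ / β|) * R ^ (-(γ / β))) * exp (-c) ≤ g n + g (n + 1) := by
    have hD : (D : ℝ) ^ β ≤ R := by rw [hRdef]; gcongr; linarith
    exact (mul_rpow_neg_mul_exp_neg_le_subGaussian hβ0 hδ hC.le hc D.cast_nonneg hR hD hRn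
      (by linarith)).trans (hg n (by omega) (by omega))
  have ha_lower (k : ℕ) (hRk : R ≤ k) (hkR : (k : ℝ) ≤ 4 * R) :
      A * (4 ^ (-|1 + α|) * R ^ (-(1 + α))) ≤ a k := by
    refine le_trans ?_ (ha k (mod_cast hR.trans_le hRk))
    gcongr
    exact rpow_neg_abs_mul_rpow_neg_le _ hR hRk hkR
  rw [subordinationTerm_of_le (by omega) (by omega), subordinationTerm_of_le (by omega) (by omega)]
  calc C * 4 ^ (-|γ / β|) * exp (-c) * (A * 4 ^ (-|1 + α|)) * R ^ (-(γ / β + (1 + α)))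
      = C * (4 ^ (-|γ / β|) * R ^ (-(γ / β))) * exp (-c) *
          (A * (4 ^ (-|1 + α|) * R ^ (-(1 + α)))) := by
        rw [neg_add (γ / β), rpow_add hR (-(γ / β))]; ring
    _ ≤ (g n + g (n + 1)) * (A * (4 ^ (-|1 + α|) * R ^ (-(1 + α)))) := by gcongr
    _ = g n * (A * (4 ^ (-|1 + α|) * R ^ (-(1 + α)))) +
          g (n + 1) * (A * (4 ^ (-|1 + α|) * R ^ (-(1 + α)))) := add_mul _ _ _
    _ ≤ g n * a n + g (n + 1) * a (n + 1) := by
      gcongr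
      · exact hg0 n
      · exact ha_lower n hRn (by linarith)
      · exact hg0 (n + 1)
      · exact ha_lower (n + 1) (by push_cast; linarith) (by push_cast; exact hnR)

end Subordination

theorem stmt19_general {α β γ δ A B c₁ c₂ c₃ c₄ : ℝ} (hβ : 1 ≤ β) (hδ : 0 < δ)
    (hαβγ : 0 < α * β + γ) (hA : 0 < A) (hB : 0 ≤ B) (hc₁ : 0 ≤ c₁) (hc₂ : 0 < c₂) (hc₃ : 0 < c₃)
    (hc₄ : 0 ≤ c₄) :
    ∃ C : ℝ, 1 ≤ C ∧ ∀ (D : ℕ) (g a : ℕ → ℝ), (∀ n, 0 ≤ g n) →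
      (∀ n : ℕ, 1 ≤ n → D ≤ n → g n ≤ subGaussian β γ δ c₁ c₂ D n) →
      (∀ n : ℕ, 1 ≤ n → D ≤ n → subGaussian β γ δ c₃ c₄ D n ≤ g n + g (n + 1)) →
      (∀ k : ℕ, 1 ≤ k → a k ∈ Icc (A * (k : ℝ) ^ (-(1 + α))) (B * (k : ℝ) ^ (-(1 + α)))) →
      1 / C * (1 + (D : ℝ)) ^ (-(α * β + γ)) ≤ ∑' n, subordinationTerm D g a n ∧
        ∑' n, subordinationTerm D g a n ≤ C * (1 + (D : ℝ)) ^ (-(α * β + γ)) := by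
  have hβ0 : 0 < β := one_pos.trans_le hβ
  set s : ℝ := γ / β + (1 + α) with hs_def
  have hexponent : β * (1 - s) = -(α * β + γ) := by rw [hs_def]; field_simp; ring
  have hs : 1 < s := by nlinarith
  obtain ⟨K, hK, hupper⟩ :=
    exists_subordinationTerm_le hβ0 hδ (hs_def ▸ one_pos.trans hs) hc₁ hc₂ hB
  obtain ⟨L, hL, hlower⟩ :=
    exists_le_subordinationTerm_add_succ (α := α) (γ := γ) hβ hδ.le hc₃ hc₄ hA
  refine ⟨max 1 (max (K / (s - 1)) (2 / L)), le_max_left _ _, fun D g a hg0 hgU hgL ha ↦ ?_⟩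
  set R : ℝ := (1 + (D : ℝ)) ^ β
  have hR : 1 ≤ R := one_le_rpow (by simp) hβ0.le
  have hR0 : 0 < R := one_pos.trans_le hR
  have hRpow : R ^ (1 - s) = (1 + (D : ℝ)) ^ (-(α * β + γ)) := by
    rw [← rpow_mul (by positivity), hexponent]
  have hterm := subordinationTerm_nonneg (D := D) hg0 fun n hn ↦
    le_trans (by positivity) (ha n hn).1
  obtain ⟨hsum, hle⟩ := summable_and_tsum_le_of_le_rpow_neg hs hR0 hK hterm
    (hupper D g a hg0 hgU fun n hn ↦ (ha n hn).2)
  have hge := mul_le_two_mul_tsum_of_le_add hterm hsum hR (by positivity)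
    (hlower D g a hg0 hgL fun n hn ↦ (ha n hn).1)
  rw [mul_left_comm, show R * R ^ (-s) = R ^ (1 - s) by
    rw [sub_eq_add_neg, rpow_add hR0, rpow_one]] at hge
  rw [← hRpow]
  constructor
  · calc 1 / max 1 (max (K / (s - 1)) (2 / L)) * R ^ (1 - s) ≤ 1 / (2 / L) * R ^ (1 - s) := by
          gcongr; exact (le_max_right _ _).trans (le_max_right _ _)
      _ ≤ ∑' n, subordinationTerm D g a n := by
        rw [one_div_div]; linarith
  · refine hle.trans ?_
    gcongr
    exact (le_max_left _ _).trans (le_max_right _ _)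

/-- (Proposition 5.7 a) of the paper.) Fix `α ∈ (0,1)` and `β, γ > 1`. Let `X`
be countably infinite with an integer-valued metric `d`, and let `g n x y` (vanishing for
`n < d x y`) satisfy the two-sided sub-Gaussian bounds with parameters `β, γ` for `n ≥ d x y`.
Let `a₀ k = (α/Γ(1-α)) Γ(k-α)/Γ(k+1)` for `k ≥ 1`, and define
`p x y = ∑_{n ≥ max 1 (d x y)} g n x y * a₀ n`. Then there is `C ≥ 1` such that
`(1/C) (1 + d x y)^{-(αβ+γ)} ≤ p x y ≤ C (1 + d x y)^{-(αβ+γ)}` for all `x, y ∈ X`. -/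
theorem stmt19 {X : Type*} [Countable X] [Infinite X]
    (α β γ : ℝ) (hα0 : 0 < α) (hα1 : α < 1) (hβ : 1 < β) (hγ : 1 < γ)
    (d : X → X → ℕ)
    (hd_self : ∀ x, d x x = 0)
    (hd_eq : ∀ x y, d x y = 0 → x = y)
    (hd_symm : ∀ x y, d x y = d y x)
    (hd_tri : ∀ x y z, d x z ≤ d x y + d y z)
    (g : ℕ → X → X → ℝ)
    (hg_nonneg : ∀ n x y, 0 ≤ g n x y)
    (hg_zero : ∀ n x y, n < d x y → g n x y = 0)
    (c₁ c₂ c₃ c₄ : ℝ) (hc₁ : 0 < c₁) (hc₂ : 0 < c₂) (hc₃ : 0 < c₃) (hc₄ : 0 < c₄)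
    (hg_upper : ∀ (n : ℕ) (x y : X), 1 ≤ n → d x y ≤ n →
      g n x y ≤ (c₁ / (n : ℝ) ^ (γ / β)) *
        Real.exp (-(c₂ * (((d x y : ℝ) / (n : ℝ) ^ (1 / β)) ^ (β / (β - 1))))))
    (hg_lower : ∀ (n : ℕ) (x y : X), 1 ≤ n → d x y ≤ n →
      (c₃ / (n : ℝ) ^ (γ / β)) *
        Real.exp (-(c₄ * (((d x y : ℝ) / (n : ℝ) ^ (1 / β)) ^ (β / (β - 1))))) ≤
        g n x y + g (n + 1) x y)
    (a₀ : ℕ → ℝ) (ha₀_zero : a₀ 0 = 0)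
    (ha₀ : ∀ k : ℕ, 1 ≤ k →
      a₀ k = (α / Real.Gamma (1 - α)) *
        (Real.Gamma ((k : ℝ) - α) / Real.Gamma ((k : ℝ) + 1)))
    (p : X → X → ℝ)
    (hp : ∀ x y, p x y = ∑' n : ℕ, (if max 1 (d x y) ≤ n then g n x y * a₀ n else 0)) :
    ∃ C : ℝ, 1 ≤ C ∧ ∀ x y : X,
      (1 / C) * (1 + (d x y : ℝ)) ^ (-(α * β + γ)) ≤ p x y ∧
      p x y ≤ C * (1 + (d x y : ℝ)) ^ (-(α * β + γ)) := by
  obtain ⟨A, B, hA, hB, hstep⟩ := exists_stableStep_mem_Icc hα0 hα1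
  obtain ⟨C, hC, hbound⟩ := stmt19_general (α := α) (γ := γ) hβ.le
    (div_pos (one_pos.trans hβ) (sub_pos.2 hβ)) (by positivity) hA hB.le hc₁.le hc₂ hc₃ hc₄.le
  exact ⟨C, hC, fun x y ↦ hp x y ▸ hbound (d x y) (g · x y) a₀ (hg_nonneg · x y) (hg_upper · x y)
    (hg_lower · x y) fun k hk ↦ ha₀ k hk ▸ hstep k hk⟩
end
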